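/- Let C_reg, C_gr ≥ 0 and let ω = Σ_{k≥1} ω_k, where each ω_k : ℝ² → (−∞,0] is smooth and compactly supported, ω_k = 0 for all sufficiently large k, supp ω_k ⊂ {2^{k−1} ≤ |x| ≤ 2^{k+1}}, ‖ω_k‖_{S¹₃} ≤ C_reg, and Σ_{k≥1} q_k ≤ C_gr where q_k := −inf_{θ∈S¹} T(|x|^{−2}ω_k)(0,θ). Then there exist a smooth compactly supported function ω̃ : ℝ² → ℝ with ω̃(x) ≤ ω(x) for all x ∈ ℝ², and a constant σ₀ ≥ 0 depending only on C_reg, C_gr, such that for every σ ≥ σ₀ the continuous function ũ(x+iy) := Eω̃(x+iy) + σ|y| (x, y ∈ ℝ²) is plurisubharmonic on ℂ², i.e. ũ(z) ≤ (1/2π)∫_{S¹} ũ(z + e^{iθ}v) dθ for all z, v ∈ ℂ². -/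

import Mathlib

open MeasureTheory Real

noncomputable section

/-- Directional derivative of a function on `ℝ²` in the direction `v`. -/
def pd (v : ℝ × ℝ) (ψ : ℝ × ℝ → ℝ) : ℝ × ℝ → ℝ := fun p => fderiv ℝ ψ p v

/-- The X-ray transform `Tψ(s,θ)`. -/
def xray (ψ : ℝ × ℝ → ℝ) (s θ : ℝ) : ℝ :=
  ∫ t : ℝ, ψ (t * Real.cos θ - s * Real.sin θ, t * Real.sin θ + s * Real.cos θ)

/-- The function `x ↦ |x|⁻² ψ(x)` on `ℝ²`. -/
def invSq (ψ : ℝ × ℝ → ℝ) : ℝ × ℝ → ℝ := fun p => (p.1 ^ 2 + p.2 ^ 2)⁻¹ * ψ p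

/-- `q(ψ) := −inf_{θ ∈ S¹} T(|x|⁻²ψ)(0,θ)`. -/
def qOf (ψ : ℝ × ℝ → ℝ) : ℝ := -(⨅ θ : ℝ, xray (invSq ψ) 0 θ)

/-- The Kohn–Nirenberg norm `‖ψ‖_{S¹₃}` is at most `C`. -/
def KNle (ψ : ℝ × ℝ → ℝ) (C : ℝ) : Prop :=
  ∀ γ₁ γ₂ : ℕ, γ₁ + γ₂ ≤ 3 → ∀ p : ℝ × ℝ,
    |Real.sqrt (1 + p.1 ^ 2 + p.2 ^ 2) ^ ((γ₁ + γ₂ : ℤ) - 1) *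
      (pd (1, 0))^[γ₁] ((pd (0, 1))^[γ₂] ψ) p| ≤ C

/-- The dyadic annulus `{2^{k−1} ≤ |x| ≤ 2^{k+1}}` in `ℝ²`. -/
def annulus (k : ℕ) : Set (ℝ × ℝ) :=
  {p | (2 : ℝ) ^ ((k : ℤ) - 1) ≤ Real.sqrt (p.1 ^ 2 + p.2 ^ 2) ∧
       Real.sqrt (p.1 ^ 2 + p.2 ^ 2) ≤ 2 ^ (k + 1)}

/-- Plurisubharmonicity via the sub-mean value property on complex lines. -/
def Psh (u : ℂ × ℂ → ℝ) : Prop :=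
  ∀ z v : ℂ × ℂ,
    u z ≤ (1 / (2 * π)) * ∫ θ in (0:ℝ)..(2 * π), u (z + Complex.exp (θ * Complex.I) • v)

/-- The function `u(x+iy) = Eω(x+iy) + σ|y|`, where `E` is the extension operator
`Eω(x+iy) = (1/π) ∫_ℝ ω(x+ty)/(1+t²) dt`. -/
def uExt (ω : ℝ × ℝ → ℝ) (σ : ℝ) : ℂ × ℂ → ℝ := fun z =>
  (1 / π) * (∫ t : ℝ, ω (z.1.re + t * z.1.im, z.2.re + t * z.2.im) / (1 + t ^ 2))
    + σ * Real.sqrt (z.1.im ^ 2 + z.2.im ^ 2)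

section

open Filter Topology

/-! ### Second derivatives and Laplacians of functions of one variable -/

/-- `g` has second derivative `A` at `0`. -/
def HasSecondDeriv (g : ℝ → ℝ) (A : ℝ) : Prop :=
  ∃ g' : ℝ → ℝ, (∀ᶠ p in 𝓝 0, HasDerivAt g (g' p) p) ∧ HasDerivAt g' A 0

namespace HasSecondDeriv

variable {g h : ℝ → ℝ} {A B : ℝ}

lemma add (hg : HasSecondDeriv g A) (hh : HasSecondDeriv h B) :
    HasSecondDeriv (fun p => g p + h p) (A + B) := by
  obtain ⟨g', hg1, hg2⟩ := hg
  obtain ⟨h', hh1, hh2⟩ := hh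
  refine ⟨fun p => g' p + h' p, ?_, hg2.add hh2⟩
  filter_upwards [hg1, hh1] with p h1 h2 using h1.add h2

lemma const_mul (c : ℝ) (hg : HasSecondDeriv g A) :
    HasSecondDeriv (fun p => c * g p) (c * A) := by
  obtain ⟨g', hg1, hg2⟩ := hg
  refine ⟨fun p => c * g' p, ?_, hg2.const_mul c⟩
  filter_upwards [hg1] with p h1 using h1.const_mul c

lemma congr (hg : HasSecondDeriv g A) (hgh : g =ᶠ[𝓝 0] h) : HasSecondDeriv h A := by
  obtain ⟨g', hg1, hg2⟩ := hg
  refine ⟨g', ?_, hg2⟩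
  filter_upwards [hg1, hgh.eventuallyEq_nhds] with p h1 h2 using h1.congr_of_eventuallyEq h2.symm

lemma const (c : ℝ) : HasSecondDeriv (fun _ => c) 0 :=
  ⟨fun _ => 0, Eventually.of_forall fun p => hasDerivAt_const p c, hasDerivAt_const 0 0⟩

lemma nonpos_of_isLocalMax (hg : HasSecondDeriv g A) (hmax : IsLocalMax g 0) : A ≤ 0 := by
  obtain ⟨g', hg1, hg2⟩ := hg
  by_contra! hA
  have hd : deriv g =ᶠ[𝓝 0] g' := by
    filter_upwards [hg1] with p hp using hp.deriv
  have hdd : deriv (deriv g) 0 = A := by rw [hd.deriv_eq, hg2.deriv]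
  have hmin := isLocalMin_of_deriv_deriv_pos (by rw [hdd]; exact hA) hmax.deriv_eq_zero
    hg1.self_of_nhds.continuousAt
  have hc : g =ᶠ[𝓝 0] fun _ => g 0 := by
    filter_upwards [hmin, hmax] with p h1 h2 using le_antisymm h2 h1
  have hd0 : deriv g =ᶠ[𝓝 0] fun _ => 0 := by
    filter_upwards [hc.eventuallyEq_nhds] with p hp
    rw [hp.deriv_eq, deriv_const]
  rw [hd0.deriv_eq, deriv_const] at hdd
  exact hA.ne hdd

lemma unique (hg : HasSecondDeriv g A) (hg' : HasSecondDeriv g B) : A = B := by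
  have key {A B : ℝ} (hA : HasSecondDeriv g A) (hB : HasSecondDeriv g B) : A + -1 * B ≤ 0 :=
    (hA.add (hB.const_mul (-1))).nonpos_of_isLocalMax
      (Eventually.of_forall fun p => by ring_nf; rfl)
  linarith [key hg hg', key hg' hg]

end HasSecondDeriv

/-- `f` has second derivatives along both coordinate axes at `ζ`, with sum `Δ`. -/
def HasLap (f : ℂ → ℝ) (Δ : ℝ) (ζ : ℂ) : Prop :=
  ∃ A B : ℝ, HasSecondDeriv (fun p => f (ζ + p)) A ∧
    HasSecondDeriv (fun q => f (ζ + q * Complex.I)) B ∧ A + B = Δ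

namespace HasLap

variable {f g : ℂ → ℝ} {Δ Δ' : ℝ} {ζ : ℂ}

lemma add (hf : HasLap f Δ ζ) (hg : HasLap g Δ' ζ) : HasLap (fun w => f w + g w) (Δ + Δ') ζ := by
  obtain ⟨A, B, h1, h2, rfl⟩ := hf
  obtain ⟨A', B', h1', h2', rfl⟩ := hg
  exact ⟨_, _, h1.add h1', h2.add h2', by ring⟩

lemma const_mul (c : ℝ) (hf : HasLap f Δ ζ) : HasLap (fun w => c * f w) (c * Δ) ζ := by
  obtain ⟨A, B, h1, h2, rfl⟩ := hf
  exact ⟨_, _, h1.const_mul c, h2.const_mul c, by ring⟩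

lemma const (c : ℝ) : HasLap (fun _ => c) 0 ζ :=
  ⟨0, 0, .const c, .const c, by ring⟩

lemma nonpos_of_isLocalMax (hf : HasLap f Δ ζ) (hmax : IsLocalMax f ζ) : Δ ≤ 0 := by
  obtain ⟨A, B, h1, h2, rfl⟩ := hf
  refine add_nonpos (h1.nonpos_of_isLocalMax ?_) (h2.nonpos_of_isLocalMax ?_)
  · have hc : ContinuousAt (fun p : ℝ => ζ + (p : ℂ)) 0 := by fun_prop
    exact IsLocalMax.comp_continuous (g := fun p : ℝ => ζ + (p : ℂ)) (by simpa using hmax) hc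
  · have hc : ContinuousAt (fun p : ℝ => ζ + (p : ℂ) * Complex.I) 0 := by fun_prop
    exact IsLocalMax.comp_continuous (g := fun p : ℝ => ζ + (p : ℂ) * Complex.I)
      (by simpa using hmax) hc

lemma congr (hf : HasLap f Δ ζ) (hfg : f =ᶠ[𝓝 ζ] g) : HasLap g Δ ζ := by
  obtain ⟨A, B, h1, h2, rfl⟩ := hf
  refine ⟨A, B, h1.congr ?_, h2.congr ?_, rfl⟩
  · have hc : Tendsto (fun p : ℝ => ζ + (p : ℂ)) (𝓝 0) (𝓝 ζ) := by
      have : ContinuousAt (fun p : ℝ => ζ + (p : ℂ)) 0 := by fun_prop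
      simpa [ContinuousAt] using this
    exact hc.eventually hfg
  · have hc : Tendsto (fun p : ℝ => ζ + (p : ℂ) * Complex.I) (𝓝 0) (𝓝 ζ) := by
      have : ContinuousAt (fun p : ℝ => ζ + (p : ℂ) * Complex.I) 0 := by fun_prop
      simpa [ContinuousAt] using this
    exact hc.eventually hfg

end HasLap

lemma hasSecondDeriv_re_of_analyticAt {h : ℂ → ℂ} {ζ : ℂ} (hh : AnalyticAt ℂ h ζ) (e : ℂ) :
    HasSecondDeriv (fun p : ℝ => (h (ζ + p * e)).re) (deriv (deriv h) ζ * e * e).re := by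
  have hline (p : ℝ) : HasDerivAt (fun p : ℝ => ζ + (p : ℂ) * e) e p := by
    simpa using ((Complex.ofRealCLM.hasDerivAt (x := p)).mul_const e).const_add ζ
  have key (k : ℂ → ℂ) (p : ℝ) (hk : DifferentiableAt ℂ k (ζ + p * e)) :
      HasDerivAt (fun p : ℝ => (k (ζ + p * e))) (deriv k (ζ + p * e) * e) p :=
    HasDerivAt.comp_of_eq (h₂ := k) p hk.hasDerivAt (hline p) rfl
  have hre (k : ℝ → ℂ) (k' : ℂ) (p : ℝ) (hk : HasDerivAt k k' p) :
      HasDerivAt (fun p => (k p).re) k'.re p :=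
    (Complex.reCLM.hasFDerivAt.comp_hasDerivAt p hk)
  have ht : Tendsto (fun p : ℝ => ζ + (p : ℂ) * e) (𝓝 0) (𝓝 ζ) := by
    have := (hline 0).continuousAt
    simpa [ContinuousAt] using this
  refine ⟨fun p => (deriv h (ζ + p * e) * e).re, ?_, ?_⟩
  · filter_upwards [ht.eventually hh.eventually_analyticAt] with p hp
    exact hre _ _ _ (key h p hp.differentiableAt)
  · have h0 : DifferentiableAt ℂ (deriv h) (ζ + (0 : ℝ) * e) := by
      simpa using hh.deriv.differentiableAt
    have := hre _ _ _ ((key (deriv h) 0 h0).mul_const e)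
    simpa using this

lemma hasLap_re_of_analyticAt {h : ℂ → ℂ} {ζ : ℂ} (hh : AnalyticAt ℂ h ζ) :
    HasLap (fun w => (h w).re) 0 ζ := by
  refine ⟨(deriv (deriv h) ζ * 1 * 1).re, _, ?_, hasSecondDeriv_re_of_analyticAt hh Complex.I, ?_⟩
  · simpa using hasSecondDeriv_re_of_analyticAt hh 1
  · simp [mul_assoc]

lemma hasLap_log_norm_sub {ζ ζ₀ : ℂ} (h : ζ ≠ ζ₀) : HasLap (fun w => Real.log ‖w - ζ₀‖) 0 ζ := by
  have hne : ζ - ζ₀ ≠ 0 := sub_ne_zero.2 h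
  have han : AnalyticAt ℂ (fun w => Complex.log ((w - ζ₀) / (ζ - ζ₀))) ζ := by
    refine AnalyticAt.clog (by fun_prop) ?_
    simp [div_self hne]
  have := (hasLap_re_of_analyticAt han).add (HasLap.const (Real.log ‖ζ - ζ₀‖))
  rw [add_zero] at this
  refine this.congr ?_
  filter_upwards [isOpen_ne.mem_nhds h] with w hw
  have hw' : w - ζ₀ ≠ 0 := sub_ne_zero.2 hw
  rw [Complex.log_re, norm_div, Real.log_div (norm_ne_zero_iff.2 hw') (norm_ne_zero_iff.2 hne)]
  ring

lemma hasLap_norm_sq (ζ : ℂ) : HasLap (fun w => ‖w‖ ^ 2) 4 ζ := by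
  have key (a b : ℝ) : HasSecondDeriv (fun p : ℝ => (a + p) ^ 2 + b) 2 := by
    refine ⟨fun p => 2 * (a + p), Eventually.of_forall fun p => ?_, ?_⟩
    · have := (((hasDerivAt_id p).const_add a).pow 2).add_const b
      simpa using this
    · simpa using ((hasDerivAt_id (0 : ℝ)).const_add a).const_mul 2
  refine ⟨2, 2, ?_, ?_, by norm_num⟩
  · convert key ζ.re (ζ.im ^ 2) using 2 with p
    simp only [Complex.sq_norm, Complex.normSq_apply]; simp; ring
  · convert key ζ.im (ζ.re ^ 2) using 2 with p
    simp only [Complex.sq_norm, Complex.normSq_apply]; simp; ring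

lemma le_of_hasLap_of_le_on_circle {f : ℂ → ℝ} (hf : Continuous f) {ζ₀ : ℂ} {ε η c L : ℝ}
    (hε : 0 < ε) (hη : 0 < η) (hL : 1 + ‖ζ₀‖ ≤ L)
    (hlap : ∀ ζ, ζ ≠ ζ₀ → ∃ Δ, 0 ≤ Δ ∧ HasLap f Δ ζ)
    (hbd : ∀ ζ, ‖ζ‖ = 1 → f ζ ≤ c) {ζ₁ : ℂ} (h1 : ‖ζ₁‖ ≤ 1) (h10 : ζ₁ ≠ ζ₀) :
    f ζ₁ + ε * ‖ζ₁‖ ^ 2 + η * (Real.log ‖ζ₁ - ζ₀‖ - Real.log L) ≤ c + ε := by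
  set G : ℂ → ℝ := fun ζ => f ζ + ε * ‖ζ‖ ^ 2 + η * (Real.log ‖ζ - ζ₀‖ - Real.log L) with hG
  have hLpos : 0 < L := by linarith [norm_nonneg ζ₀]
  obtain ⟨M, hM⟩ := (isCompact_closedBall (0 : ℂ) 1).bddAbove_image
    (f := fun ζ => f ζ + ε * ‖ζ‖ ^ 2) (by fun_prop)
  have hM' (ζ : ℂ) (hζ : ‖ζ‖ ≤ 1) : f ζ + ε * ‖ζ‖ ^ 2 ≤ M :=
    hM ⟨ζ, by simpa using hζ, rfl⟩
  -- near `ζ₀` the logarithm makes `G` smaller than `G ζ₁`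
  have hlog : Tendsto (fun δ : ℝ => M + η * (Real.log δ - Real.log L)) (𝓝[>] 0) atBot := by
    refine tendsto_atBot_add_const_left _ _ (Tendsto.const_mul_atBot hη ?_)
    exact tendsto_atBot_add_const_right _ _ Real.tendsto_log_nhdsGT_zero
  obtain ⟨δ, hδ1, hδ2, hδ3⟩ : ∃ δ : ℝ, M + η * (Real.log δ - Real.log L) < G ζ₁ ∧ 0 < δ ∧
      δ < ‖ζ₁ - ζ₀‖ := by
    have h3 : ∀ᶠ δ : ℝ in 𝓝[>] 0, δ < ‖ζ₁ - ζ₀‖ :=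
      (eventually_lt_nhds (norm_pos_iff.2 (sub_ne_zero.2 h10))).filter_mono nhdsWithin_le_nhds
    exact ((hlog.eventually_lt_atBot (G ζ₁)).and (eventually_mem_nhdsWithin.and h3)).exists
  have hsmall (ζ : ℂ) (hζ : ‖ζ‖ ≤ 1) (hne : ζ ≠ ζ₀) (hd : ‖ζ - ζ₀‖ ≤ δ) : G ζ < G ζ₁ := by
    refine lt_of_le_of_lt ?_ hδ1
    have : Real.log ‖ζ - ζ₀‖ ≤ Real.log δ :=
      Real.log_le_log (norm_pos_iff.2 (sub_ne_zero.2 hne)) hd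
    have h2 := hM' ζ hζ
    simp only [hG]
    gcongr
  have hK : IsCompact (Metric.closedBall (0 : ℂ) 1 \ Metric.ball ζ₀ δ) :=
    (isCompact_closedBall _ _).diff Metric.isOpen_ball
  have hcont : ContinuousOn G (Metric.closedBall (0 : ℂ) 1 \ Metric.ball ζ₀ δ) := by
    have : ContinuousOn (fun ζ => Real.log ‖ζ - ζ₀‖)
        (Metric.closedBall (0 : ℂ) 1 \ Metric.ball ζ₀ δ) := by
      refine ContinuousOn.log (by fun_prop) fun ζ hζ => ?_
      have := hζ.2
      simp only [Metric.mem_ball, dist_eq_norm, not_lt] at this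
      exact (lt_of_lt_of_le hδ2 this).ne'
    fun_prop
  obtain ⟨ζ₂, ⟨hζ₂, hζ₂'⟩, hmax⟩ := hK.exists_isMaxOn
    ⟨ζ₁, by simpa using h1, by simpa [dist_eq_norm] using hδ3.le⟩ hcont
  have hge : G ζ₁ ≤ G ζ₂ := hmax ⟨by simpa using h1, by simpa [dist_eq_norm] using hδ3.le⟩
  simp only [mem_closedBall_zero_iff] at hζ₂
  simp only [Metric.mem_ball, dist_eq_norm, not_lt] at hζ₂'
  have hne2 : ζ₂ ≠ ζ₀ := by
    rintro rfl
    simp at hζ₂'; linarith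
  have hgt : δ < ‖ζ₂ - ζ₀‖ := by
    by_contra! h
    exact absurd hge (not_le.2 (hsmall ζ₂ hζ₂ hne2 h))
  have hone : ‖ζ₂‖ = 1 := by
    by_contra hne
    have hlt : ‖ζ₂‖ < 1 := lt_of_le_of_ne hζ₂ hne
    have hloc : IsLocalMax G ζ₂ := by
      refine hmax.isLocalMax ?_
      have h1 : ∀ᶠ ζ in 𝓝 ζ₂, ‖ζ‖ < 1 := continuous_norm.continuousAt.eventually_lt_const hlt
      have h2 : ∀ᶠ ζ in 𝓝 ζ₂, δ < ‖ζ - ζ₀‖ :=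
        Tendsto.eventually_const_lt hgt
          (show ContinuousAt (fun ζ => ‖ζ - ζ₀‖) ζ₂ by fun_prop)
      filter_upwards [h1, h2] with ζ h1 h2
      exact ⟨by simpa using h1.le, by simpa [dist_eq_norm] using h2.le⟩
    obtain ⟨Δ, hΔ, hfΔ⟩ := hlap ζ₂ hne2
    have := ((hfΔ.add ((hasLap_norm_sq ζ₂).const_mul ε)).add
      (((hasLap_log_norm_sub hne2).add (HasLap.const (-Real.log L))).const_mul η))
    have := this.nonpos_of_isLocalMax (by simpa only [hG, sub_eq_add_neg] using hloc)
    nlinarith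
  refine hge.trans ?_
  have hb := hbd ζ₂ hone
  have hl : Real.log ‖ζ₂ - ζ₀‖ ≤ Real.log L := by
    refine Real.log_le_log (norm_pos_iff.2 (sub_ne_zero.2 hne2)) ?_
    calc ‖ζ₂ - ζ₀‖ ≤ ‖ζ₂‖ + ‖ζ₀‖ := norm_sub_le _ _
      _ ≤ L := by rw [hone]; exact hL
  simp only [hG, hone]
  nlinarith

/-- The maximum principle on the unit disc, allowing one exceptional point. -/
lemma le_of_hasLap_nonneg {f : ℂ → ℝ} (hf : Continuous f) {ζ₀ : ℂ} {c : ℝ}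
    (hlap : ∀ ζ, ζ ≠ ζ₀ → ∃ Δ, 0 ≤ Δ ∧ HasLap f Δ ζ)
    (hbd : ∀ ζ, ‖ζ‖ = 1 → f ζ ≤ c) {ζ : ℂ} (hζ : ‖ζ‖ < 1) : f ζ ≤ c := by
  have hoff (ζ₁ : ℂ) (h1 : ‖ζ₁‖ ≤ 1) (h10 : ζ₁ ≠ ζ₀) : f ζ₁ ≤ c := by
    have key (ε : ℝ) (hε : 0 < ε) := le_of_hasLap_of_le_on_circle hf hε hε le_rfl hlap hbd h1 h10
    have ht : Tendsto (fun ε : ℝ => f ζ₁ + ε * ‖ζ₁‖ ^ 2 +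
        ε * (Real.log ‖ζ₁ - ζ₀‖ - Real.log (1 + ‖ζ₀‖))) (𝓝[>] 0) (𝓝 (f ζ₁)) := by
      have : Continuous (fun ε : ℝ => f ζ₁ + ε * ‖ζ₁‖ ^ 2 +
        ε * (Real.log ‖ζ₁ - ζ₀‖ - Real.log (1 + ‖ζ₀‖))) := by fun_prop
      simpa using (this.tendsto 0).mono_left nhdsWithin_le_nhds
    have ht' : Tendsto (fun ε : ℝ => c + ε) (𝓝[>] 0) (𝓝 c) := by
      have : Continuous (fun ε : ℝ => c + ε) := by fun_prop
      simpa using (this.tendsto 0).mono_left nhdsWithin_le_nhds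
    exact le_of_tendsto_of_tendsto ht ht' (eventually_mem_nhdsWithin.mono fun ε hε => key ε hε)
  refine le_of_tendsto (f := f) (x := 𝓝[≠] ζ) (hf.continuousAt.mono_left nhdsWithin_le_nhds) ?_
  by_cases h : ζ = ζ₀
  · have h1 : ∀ᶠ w in 𝓝[≠] ζ, ‖w‖ < 1 :=
      (continuous_norm.continuousAt.eventually_lt_const hζ).filter_mono nhdsWithin_le_nhds
    filter_upwards [h1, eventually_mem_nhdsWithin] with w hw hw'
    exact hoff w hw.le (by rintro rfl; exact hw' h.symm)
  · have h1 : ∀ᶠ w in 𝓝[≠] ζ, ‖w‖ < 1 :=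
      (continuous_norm.continuousAt.eventually_lt_const hζ).filter_mono nhdsWithin_le_nhds
    filter_upwards [h1, (isOpen_ne.mem_nhds h |> mem_nhdsWithin_of_mem_nhds)] with w hw hw'
    exact hoff w hw.le hw'

open Complex in
/-- Continuous functions on the circle are uniform limits of real parts of entire functions. -/
lemma exists_differentiable_re_approx {f : ℂ → ℝ} (hf : Continuous f) {ε : ℝ} (hε : 0 < ε) :
    ∃ P : ℂ → ℂ, Differentiable ℂ P ∧ ∀ θ : ℝ, |f (exp (θ * I)) - (P (exp (θ * I))).re| ≤ ε := by
  have : Fact (0 < 2 * π) := ⟨Real.two_pi_pos⟩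
  have hspan (g : C(AddCircle (2 * π), ℂ))
      (hg : g ∈ Submodule.span ℂ (Set.range (@fourier (2 * π)))) :
      ∃ P Q : ℂ → ℂ, Differentiable ℂ P ∧ Differentiable ℂ Q ∧
        ∀ θ : ℝ, g (θ : AddCircle (2 * π)) =
          P (exp (θ * I)) + (starRingEnd ℂ) (Q (exp (θ * I))) := by
    induction hg using Submodule.span_induction with
    | mem g hg =>
      obtain ⟨n, rfl⟩ := hg
      have hval (θ : ℝ) : fourier n (θ : AddCircle (2 * π)) = exp (n * (θ * I)) := by
        rw [fourier_coe_apply]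
        congr 1
        have : (π : ℂ) ≠ 0 := by exact_mod_cast Real.pi_ne_zero
        push_cast
        field_simp
      obtain ⟨m, rfl | rfl⟩ := n.eq_nat_or_neg
      · refine ⟨fun z => z ^ m, fun _ => 0, by fun_prop, by fun_prop, fun θ => ?_⟩
        simp only [hval, ← Complex.exp_nat_mul]; simp
      · refine ⟨fun _ => 0, fun z => z ^ m, by fun_prop, by fun_prop, fun θ => ?_⟩
        simp only [hval, ← Complex.exp_nat_mul, ← Complex.exp_conj]; simp
    | zero => exact ⟨fun _ => 0, fun _ => 0, by fun_prop, by fun_prop, fun θ => by simp⟩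
    | add g h _ _ hg hh =>
      obtain ⟨P, Q, hP, hQ, h1⟩ := hg
      obtain ⟨P', Q', hP', hQ', h1'⟩ := hh
      refine ⟨fun z => P z + P' z, fun z => Q z + Q' z, by fun_prop, by fun_prop, fun θ => ?_⟩
      simp only [ContinuousMap.add_apply, h1, h1', map_add]; ring
    | smul c g _ hg =>
      obtain ⟨P, Q, hP, hQ, h1⟩ := hg
      refine ⟨fun z => c * P z, fun z => (starRingEnd ℂ) c * Q z, by fun_prop, by fun_prop,
        fun θ => ?_⟩
      simp only [ContinuousMap.smul_apply, h1, map_mul, smul_eq_mul, RingHomCompTriple.comp_apply,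
        RingHom.id_apply]; ring
  have hper : Function.Periodic (fun θ : ℝ => (f (exp (θ * I)) : ℂ)) (2 * π) := by
    intro θ
    have : ((θ + 2 * π : ℝ) : ℂ) * I = θ * I + 2 * π * I := by push_cast; ring
    simp only [this, Complex.exp_periodic _]
  let F : C(AddCircle (2 * π), ℂ) :=
    ⟨hper.lift, continuous_coinduced_dom.2 (by
      change Continuous (fun θ : ℝ => (f (exp (θ * I)) : ℂ)); fun_prop)⟩
  have hF (θ : ℝ) : F (θ : AddCircle (2 * π)) = (f (exp (θ * I)) : ℂ) := hper.lift_coe θ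
  have hmem : F ∈ (Submodule.span ℂ (Set.range (@fourier (2 * π)))).topologicalClosure := by
    rw [span_fourier_closure_eq_top]; trivial
  obtain ⟨g, hg, hdist⟩ := Metric.mem_closure_iff.1 hmem ε hε
  obtain ⟨P, Q, hP, hQ, h1⟩ := hspan g hg
  refine ⟨fun z => P z + Q z, by fun_prop, fun θ => ?_⟩
  have h2 : ‖F θ - g θ‖ ≤ ε := by
    rw [← dist_eq_norm]
    exact (ContinuousMap.dist_apply_le_dist _).trans hdist.le
  have h3 := (Complex.abs_re_le_norm (F θ - g θ)).trans h2
  rw [hF, h1] at h3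
  simpa using h3

open Complex in
/-- A continuous function whose Laplacian is nonnegative off one point has the sub-mean value
property on the unit circle. -/
lemma le_circle_mean_of_hasLap {f : ℂ → ℝ} (hf : Continuous f) {ζ₀ : ℂ}
    (hlap : ∀ ζ, ζ ≠ ζ₀ → ∃ Δ, 0 ≤ Δ ∧ HasLap f Δ ζ) :
    f 0 ≤ (1 / (2 * π)) * ∫ θ in (0 : ℝ)..(2 * π), f (exp (θ * I)) := by
  refine le_of_forall_pos_le_add fun ε hε => ?_
  obtain ⟨P, hP, hPf⟩ := exists_differentiable_re_approx hf (half_pos hε)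
  have hmax : f 0 - (P 0).re ≤ ε / 2 := by
    refine le_of_hasLap_nonneg (f := fun ζ => f ζ - (P ζ).re) (ζ₀ := ζ₀)
      (by have := hP.continuous; fun_prop) ?_ ?_ (ζ := 0) (by simp)
    · intro ζ hζ
      obtain ⟨Δ, hΔ, h⟩ := hlap ζ hζ
      refine ⟨Δ, hΔ, ?_⟩
      have := h.add ((hasLap_re_of_analyticAt (hP.analyticAt ζ)).const_mul (-1))
      simpa [sub_eq_add_neg] using this
    · intro ζ hζ
      have := (abs_le.1 (hPf (arg ζ))).2
      have he : exp (arg ζ * I) = ζ := by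
        have := norm_mul_exp_arg_mul_I ζ
        rwa [hζ, ofReal_one, one_mul] at this
      rwa [he] at this
  have hmean : (P 0).re = (1 / (2 * π)) * ∫ θ in (0 : ℝ)..(2 * π), (P (exp (θ * I))).re := by
    have h1 : Real.circleAverage P 0 1 = P 0 :=
      (hP.diffContOnCl (s := Metric.ball 0 |1|)).circleAverage
    rw [Real.circleAverage_def] at h1
    simp only [circleMap_zero, ofReal_one, one_mul] at h1
    rw [← h1, Complex.smul_re]
    have : (∫ θ in (0 : ℝ)..(2 * π), P (exp (θ * I))).re =
        ∫ θ in (0 : ℝ)..(2 * π), (P (exp (θ * I))).re := by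
      have := hP.continuous
      exact (Complex.reCLM.intervalIntegral_comp_comm
        (Continuous.intervalIntegrable (by fun_prop) _ _)).symm
    rw [this, smul_eq_mul, one_div]
  have hInt : ∫ θ in (0 : ℝ)..(2 * π), (P (exp (θ * I))).re ≤
      ∫ θ in (0 : ℝ)..(2 * π), (f (exp (θ * I)) + ε / 2) := by
    have := hP.continuous
    refine intervalIntegral.integral_mono Real.two_pi_pos.le
      (Continuous.intervalIntegrable (by fun_prop) _ _)
      (Continuous.intervalIntegrable (by fun_prop) _ _) fun θ => ?_
    have := (abs_le.1 (hPf θ)).1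
    linarith
  rw [intervalIntegral.integral_add (Continuous.intervalIntegrable (by fun_prop) _ _)
    (by simp), intervalIntegral.integral_const] at hInt
  have h2 : (1 / (2 * π)) * ∫ θ in (0 : ℝ)..(2 * π), (P (exp (θ * I))).re ≤
      (1 / (2 * π)) * (∫ θ in (0 : ℝ)..(2 * π), f (exp (θ * I))) + ε / 2 := by
    generalize (∫ θ in (0 : ℝ)..(2 * π), f (exp (θ * I))) = J at hInt ⊢
    calc _ ≤ (1 / (2 * π)) * (J + (2 * π - 0) • (ε / 2)) := by gcongr
      _ = _ := by have := Real.pi_ne_zero; simp only [smul_eq_mul]; field_simp; ring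
  linarith

/-! ### Directional derivatives -/

lemma ContDiff.pd {ψ : ℝ × ℝ → ℝ} (hψ : ContDiff ℝ (⊤ : ℕ∞) ψ) (v : ℝ × ℝ) :
    ContDiff ℝ (⊤ : ℕ∞) (pd v ψ) :=
  (hψ.fderiv_right (m := (⊤ : ℕ∞)) le_rfl).clm_apply contDiff_const

lemma HasCompactSupport.pd {ψ : ℝ × ℝ → ℝ} (hψ : HasCompactSupport ψ) (v : ℝ × ℝ) :
    HasCompactSupport (pd v ψ) :=
  hψ.fderiv_apply (𝕜 := ℝ) v

lemma tsupport_pd_subset (ψ : ℝ × ℝ → ℝ) (v : ℝ × ℝ) : tsupport (pd v ψ) ⊆ tsupport ψ :=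
  tsupport_fderiv_apply_subset ℝ v

section

variable {ψ φ : ℝ × ℝ → ℝ}

lemma smooth_differentiable (hψ : ContDiff ℝ (⊤ : ℕ∞) ψ) : Differentiable ℝ ψ :=
  hψ.differentiable (by simp)

lemma hasDerivAt_comp_curve (hψ : ContDiff ℝ (⊤ : ℕ∞) ψ) {c : ℝ → ℝ × ℝ} {c' : ℝ × ℝ} {t : ℝ}
    (hc : HasDerivAt c c' t) : HasDerivAt (fun t => ψ (c t)) (pd c' ψ (c t)) t :=
  (smooth_differentiable hψ (c t)).hasFDerivAt.comp_hasDerivAt t hc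

lemma pd_vec_add (u v : ℝ × ℝ) (ψ : ℝ × ℝ → ℝ) (p : ℝ × ℝ) :
    pd (u + v) ψ p = pd u ψ p + pd v ψ p := map_add _ _ _

lemma pd_vec_smul (c : ℝ) (v : ℝ × ℝ) (ψ : ℝ × ℝ → ℝ) (p : ℝ × ℝ) :
    pd (c • v) ψ p = c * pd v ψ p := map_smul _ _ _

lemma pd_expand (v : ℝ × ℝ) (ψ : ℝ × ℝ → ℝ) (p : ℝ × ℝ) :
    pd v ψ p = v.1 * pd (1, 0) ψ p + v.2 * pd (0, 1) ψ p := by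
  have : v = v.1 • ((1, 0) : ℝ × ℝ) + v.2 • ((0, 1) : ℝ × ℝ) := by ext <;> simp
  conv_lhs => rw [this]
  rw [pd_vec_add, pd_vec_smul, pd_vec_smul]

lemma pd_add (v : ℝ × ℝ) (hψ : ContDiff ℝ (⊤ : ℕ∞) ψ) (hφ : ContDiff ℝ (⊤ : ℕ∞) φ) :
    pd v (fun p => ψ p + φ p) = fun p => pd v ψ p + pd v φ p := by
  funext p
  simp only [pd]
  rw [fderiv_fun_add (smooth_differentiable hψ p) (smooth_differentiable hφ p)]
  rfl

lemma pd_const_mul (v : ℝ × ℝ) (c : ℝ) (hψ : ContDiff ℝ (⊤ : ℕ∞) ψ) :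
    pd v (fun p => c * ψ p) = fun p => c * pd v ψ p := by
  funext p
  simp only [pd]
  rw [fderiv_const_mul (smooth_differentiable hψ p)]
  rfl

lemma pd_mul (v : ℝ × ℝ) (hψ : ContDiff ℝ (⊤ : ℕ∞) ψ) (hφ : ContDiff ℝ (⊤ : ℕ∞) φ) :
    pd v (fun p => ψ p * φ p) = fun p => pd v ψ p * φ p + ψ p * pd v φ p := by
  funext p
  simp only [pd]
  rw [fderiv_fun_mul (smooth_differentiable hψ p) (smooth_differentiable hφ p)]
  simp
  ring

lemma pd_sum {ι : Type*} (v : ℝ × ℝ) (s : Finset ι) {f : ι → ℝ × ℝ → ℝ}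
    (hf : ∀ i ∈ s, ContDiff ℝ (⊤ : ℕ∞) (f i)) :
    pd v (fun p => ∑ i ∈ s, f i p) = fun p => ∑ i ∈ s, pd v (f i) p := by
  funext p
  simp only [pd]
  rw [fderiv_fun_sum fun i hi => smooth_differentiable (hf i hi) p]
  simp

lemma pd_comp_smul (v : ℝ × ℝ) (c : ℝ) (hψ : ContDiff ℝ (⊤ : ℕ∞) ψ) :
    pd v (fun p => ψ (c • p)) = fun p => c * pd v ψ (c • p) := by
  funext p
  have h := (smooth_differentiable hψ (c • p)).hasFDerivAt.comp p
    ((hasFDerivAt_id (𝕜 := ℝ) p).const_smul c)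
  simp only [pd]
  rw [show (fun p => ψ (c • p)) = ψ ∘ (c • ·) from rfl, h.fderiv]
  simp

lemma pd_comm (hψ : ContDiff ℝ (⊤ : ℕ∞) ψ) (u v : ℝ × ℝ) : pd u (pd v ψ) = pd v (pd u ψ) := by
  have key (u v p : ℝ × ℝ) : pd u (pd v ψ) p = fderiv ℝ (fderiv ℝ ψ) p u v := by
    have hd : DifferentiableAt ℝ (fderiv ℝ ψ) p :=
      (hψ.fderiv_right (m := (⊤ : ℕ∞)) le_rfl).differentiable (by simp) p
    unfold pd
    rw [fderiv_clm_apply hd (by fun_prop)]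
    simp
  funext p
  rw [key, key]
  exact hψ.contDiffAt.isSymmSndFDerivAt (by
    simp only [minSmoothness_of_isRCLikeNormedField]; exact WithTop.coe_le_coe.2 le_top) u v

lemma pd_pd_vec_add_smul (hψ : ContDiff ℝ (⊤ : ℕ∞) ψ) (α β : ℝ) (u v p : ℝ × ℝ) :
    pd (α • u + β • v) (pd (α • u + β • v) ψ) p =
      α ^ 2 * pd u (pd u ψ) p + 2 * α * β * pd u (pd v ψ) p + β ^ 2 * pd v (pd v ψ) p := by
  have h : pd (α • u + β • v) ψ = fun p => α * pd u ψ p + β * pd v ψ p := by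
    funext p; rw [pd_vec_add, pd_vec_smul, pd_vec_smul]
  have h' (w : ℝ × ℝ) : pd w (pd (α • u + β • v) ψ) p =
      α * pd w (pd u ψ) p + β * pd w (pd v ψ) p := by
    rw [h, pd_add w (contDiff_const.mul (hψ.pd u)) (contDiff_const.mul (hψ.pd v)),
      pd_const_mul w α (hψ.pd u), pd_const_mul w β (hψ.pd v)]
  rw [pd_vec_add, pd_vec_smul, pd_vec_smul, h', h', pd_comm hψ v u]
  ring

lemma pd_pd_expand (hψ : ContDiff ℝ (⊤ : ℕ∞) ψ) (v p : ℝ × ℝ) :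
    pd v (pd v ψ) p = v.1 ^ 2 * pd (1, 0) (pd (1, 0) ψ) p +
      2 * v.1 * v.2 * pd (1, 0) (pd (0, 1) ψ) p + v.2 ^ 2 * pd (0, 1) (pd (0, 1) ψ) p := by
  have : v = v.1 • ((1, 0) : ℝ × ℝ) + v.2 • ((0, 1) : ℝ × ℝ) := by ext <;> simp
  conv_lhs => rw [this]
  exact pd_pd_vec_add_smul hψ _ _ _ _ _

lemma pd_pd_pd_expand (hψ : ContDiff ℝ (⊤ : ℕ∞) ψ) (v p : ℝ × ℝ) :
    pd v (pd v (pd v ψ)) p = v.1 ^ 3 * pd (1, 0) (pd (1, 0) (pd (1, 0) ψ)) p +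
      3 * v.1 ^ 2 * v.2 * pd (1, 0) (pd (1, 0) (pd (0, 1) ψ)) p +
      3 * v.1 * v.2 ^ 2 * pd (1, 0) (pd (0, 1) (pd (0, 1) ψ)) p +
      v.2 ^ 3 * pd (0, 1) (pd (0, 1) (pd (0, 1) ψ)) p := by
  have h1 : pd v ψ = fun p => v.1 * pd (1, 0) ψ p + v.2 * pd (0, 1) ψ p :=
    funext (pd_expand v ψ)
  have hx := hψ.pd (1, 0)
  have hy := hψ.pd (0, 1)
  have h2 (w : ℝ × ℝ) : pd w (pd v ψ) = fun p => v.1 * pd w (pd (1, 0) ψ) p +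
      v.2 * pd w (pd (0, 1) ψ) p := by
    rw [h1, pd_add w (contDiff_const.mul hx) (contDiff_const.mul hy), pd_const_mul w _ hx,
      pd_const_mul w _ hy]
  have h3 (w w' : ℝ × ℝ) : pd w (pd w' (pd v ψ)) p = v.1 * pd w (pd w' (pd (1, 0) ψ)) p +
      v.2 * pd w (pd w' (pd (0, 1) ψ)) p := by
    rw [h2, pd_add w (contDiff_const.mul (hx.pd w')) (contDiff_const.mul (hy.pd w')),
      pd_const_mul w _ (hx.pd w'), pd_const_mul w _ (hy.pd w')]
  rw [pd_pd_expand (hψ.pd v), h3, h3, h3, pd_comm hψ (0, 1) (1, 0),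
    pd_comm hy (0, 1) (1, 0)]
  ring

/-! ### Integrals along lines -/

lemma HasCompactSupport.exists_norm_lt (hψ : HasCompactSupport ψ) :
    ∃ R : ℝ, 0 < R ∧ ∀ p : ℝ × ℝ, R ≤ ‖p‖ → p ∉ tsupport ψ := by
  obtain ⟨R, hR⟩ := (hψ.isCompact.isBounded).exists_norm_le
  refine ⟨max R 0 + 1, by positivity, fun p hp hmem => ?_⟩
  have := hR p hmem
  have := le_max_left R 0
  linarith

lemma hasCompactSupport_comp_line (hψ : HasCompactSupport ψ) (x : ℝ × ℝ) {y : ℝ × ℝ} (hy : y ≠ 0) :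
    HasCompactSupport (fun t : ℝ => ψ (x + t • y)) := by
  obtain ⟨R, hR, hout⟩ := hψ.exists_norm_lt
  refine HasCompactSupport.of_support_subset_isCompact
    (isCompact_closedBall (0 : ℝ) ((R + ‖x‖) / ‖y‖)) fun t ht => ?_
  by_contra hcon
  refine ht (image_eq_zero_of_notMem_tsupport (hout _ ?_))
  simp only [mem_closedBall_zero_iff, not_le] at hcon
  have hy' : 0 < ‖y‖ := norm_pos_iff.2 hy
  rw [div_lt_iff₀ hy'] at hcon
  have h1 : ‖t • y‖ ≤ ‖x + t • y‖ + ‖x‖ := by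
    simpa using norm_sub_le (x + t • y) x
  rw [norm_smul] at h1
  linarith

lemma integrable_comp_line (hψ : Continuous ψ) (hc : HasCompactSupport ψ) (x : ℝ × ℝ)
    {y : ℝ × ℝ} (hy : y ≠ 0) : Integrable (fun t : ℝ => ψ (x + t • y)) :=
  Continuous.integrable_of_hasCompactSupport (by fun_prop) (hasCompactSupport_comp_line hc x hy)

lemma integral_pd_line_eq_zero (hψ : ContDiff ℝ (⊤ : ℕ∞) ψ) (hc : HasCompactSupport ψ) (x : ℝ × ℝ)
    {y : ℝ × ℝ} (hy : y ≠ 0) : ∫ t : ℝ, pd y ψ (x + t • y) = 0 := by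
  refine integral_eq_zero_of_hasDerivAt_of_integrable (f := fun t : ℝ => ψ (x + t • y))
    (fun t => ?_) (integrable_comp_line (hψ.pd y).continuous (hc.pd y) x hy)
    (integrable_comp_line hψ.continuous hc x hy)
  refine hasDerivAt_comp_curve hψ ?_
  simpa using ((hasDerivAt_id t).smul_const y).const_add x

/-- Differentiation under the integral sign for jointly continuous derivatives. -/
lemma hasDerivAt_intervalIntegral_param {Φ Φ' : ℝ → ℝ → ℝ}
    (hΦ : ∀ p, Continuous (Φ p)) (hΦ' : Continuous fun z : ℝ × ℝ => Φ' z.1 z.2)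
    (hd : ∀ p t, HasDerivAt (fun p => Φ p t) (Φ' p t) p) (a b p : ℝ) :
    HasDerivAt (fun p => ∫ t in a..b, Φ p t) (∫ t in a..b, Φ' p t) p := by
  obtain ⟨M, hM⟩ := ((isCompact_closedBall p 1).prod
    (isCompact_uIcc (a := a) (b := b))).bddAbove_image
    (f := fun z : ℝ × ℝ => ‖Φ' z.1 z.2‖) (by fun_prop)
  refine (intervalIntegral.hasDerivAt_integral_of_dominated_loc_of_deriv_le
    (bound := fun _ => M) (Metric.closedBall_mem_nhds p one_pos)
    (Eventually.of_forall fun q => (hΦ q).aestronglyMeasurable)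
    ((hΦ p).intervalIntegrable _ _) ?_ ?_ (by simp) ?_).2
  · exact Continuous.aestronglyMeasurable (by fun_prop)
  · refine Eventually.of_forall fun t ht q hq => hM ⟨(q, t), ⟨hq, Set.uIoc_subset_uIcc ht⟩, rfl⟩
  · exact Eventually.of_forall fun t _ q _ => hd q t

lemma integral_eq_intervalIntegral_of_forall_zero {f : ℝ → ℝ} {T : ℝ} (hT : 0 ≤ T)
    (hf : ∀ t, T < |t| → f t = 0) : ∫ t, f t = ∫ t in (-T)..T, f t := by
  have hf' (t : ℝ) (ht : t ∉ Set.Icc (-T) T) : f t = 0 := hf t (by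
    by_contra! h; exact ht (abs_le.1 h))
  rw [intervalIntegral.integral_of_le (by linarith), ← integral_Icc_eq_integral_Ioc,
    setIntegral_eq_integral_of_forall_compl_eq_zero hf']

end

/-! ### Second derivatives of the extension -/

section
variable {ψ : ℝ × ℝ → ℝ}

lemma exists_uniform_line_support (hc : HasCompactSupport ψ) (X A B : ℝ × ℝ) {Y : ℝ × ℝ}
    (hY : Y ≠ 0) : ∃ T : ℝ, 0 ≤ T ∧ ∀ᶠ p : ℝ in 𝓝 0, ∀ t : ℝ, T < |t| →
      (X + p • A) + t • (Y + p • B) ∉ tsupport ψ := by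
  obtain ⟨R, hR, hout⟩ := hc.exists_norm_lt
  have hY' : 0 < ‖Y‖ := norm_pos_iff.2 hY
  refine ⟨(R + (‖X‖ + 1)) / (‖Y‖ / 2), by positivity, ?_⟩
  have h1 : ∀ᶠ p : ℝ in 𝓝 0, ‖X + p • A‖ < ‖X‖ + 1 := by
    have : ContinuousAt (fun p : ℝ => ‖X + p • A‖) 0 := by fun_prop
    exact this.eventually_lt_const (by simp)
  have h2 : ∀ᶠ p : ℝ in 𝓝 0, ‖Y‖ / 2 < ‖Y + p • B‖ := by
    have : ContinuousAt (fun p : ℝ => ‖Y + p • B‖) 0 := by fun_prop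
    exact Tendsto.eventually_const_lt (by simpa using hY') this
  filter_upwards [h1, h2] with p h1 h2 t ht
  refine hout _ ?_
  rw [div_lt_iff₀ (by positivity)] at ht
  have h3 : ‖t • (Y + p • B)‖ ≤ ‖(X + p • A) + t • (Y + p • B)‖ + ‖X + p • A‖ := by
    simpa using norm_sub_le ((X + p • A) + t • (Y + p • B)) (X + p • A)
  rw [norm_smul, Real.norm_eq_abs] at h3
  have h4 : |t| * (‖Y‖ / 2) ≤ |t| * ‖Y + p • B‖ := by gcongr
  linarith

lemma hasSecondDeriv_integral_line (hψ : ContDiff ℝ (⊤ : ℕ∞) ψ) (hc : HasCompactSupport ψ)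
    {w : ℝ → ℝ} (hw : Continuous w) (X A B : ℝ × ℝ) {Y : ℝ × ℝ} (hY : Y ≠ 0) :
    HasSecondDeriv (fun p => ∫ t : ℝ, w t * ψ ((X + p • A) + t • (Y + p • B)))
      (∫ t : ℝ, w t * pd (A + t • B) (pd (A + t • B) ψ) (X + t • Y)) := by
  obtain ⟨T, hT, hsupp⟩ := exists_uniform_line_support hc X A B hY
  have hcurve (t p : ℝ) :
      HasDerivAt (fun p : ℝ => (X + p • A) + t • (Y + p • B)) (A + t • B) p := by
    have h1 : HasDerivAt (fun p : ℝ => X + p • A) A p := by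
      simpa using ((hasDerivAt_id p).smul_const A).const_add X
    have h2 : HasDerivAt (fun p : ℝ => Y + p • B) B p := by
      simpa using ((hasDerivAt_id p).smul_const B).const_add Y
    exact h1.add (h2.const_smul t)
  have hψc := hψ.continuous
  have hx := (hψ.pd (1, 0)).continuous
  have hy := (hψ.pd (0, 1)).continuous
  have hxx := ((hψ.pd (1, 0)).pd (1, 0)).continuous
  have hxy := ((hψ.pd (0, 1)).pd (1, 0)).continuous
  have hyy := ((hψ.pd (0, 1)).pd (0, 1)).continuous
  refine HasSecondDeriv.congr
    (g := fun p => ∫ t in (-T)..T, w t * ψ ((X + p • A) + t • (Y + p • B))) ?_ ?_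
  · rw [integral_eq_intervalIntegral_of_forall_zero hT]
    · refine ⟨fun p => ∫ t in (-T)..T, w t * pd (A + t • B) ψ ((X + p • A) + t • (Y + p • B)),
        Eventually.of_forall fun p => ?_, ?_⟩
      · refine hasDerivAt_intervalIntegral_param
          (Φ := fun p t => w t * ψ ((X + p • A) + t • (Y + p • B)))
          (Φ' := fun p t => w t * pd (A + t • B) ψ ((X + p • A) + t • (Y + p • B)))
          (fun p => by fun_prop) ?_ (fun p t => ?_) _ _ _
        · simp_rw [fun t : ℝ => pd_expand (A + t • B) ψ]
          fun_prop
        · exact (hasDerivAt_comp_curve hψ (hcurve t p)).const_mul _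
      · have := hasDerivAt_intervalIntegral_param
          (Φ := fun p t => w t * pd (A + t • B) ψ ((X + p • A) + t • (Y + p • B)))
          (Φ' := fun p t =>
            w t * pd (A + t • B) (pd (A + t • B) ψ) ((X + p • A) + t • (Y + p • B)))
          (fun p => ?_) ?_ (fun p t => ?_) (-T) T 0
        · simpa using this
        · simp_rw [fun t : ℝ => pd_expand (A + t • B) ψ]
          fun_prop
        · simp_rw [fun t : ℝ => pd_pd_expand hψ (A + t • B)]
          fun_prop
        · exact (hasDerivAt_comp_curve (hψ.pd _) (hcurve t p)).const_mul _
    · intro t ht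
      have h := hsupp.self_of_nhds t ht
      simp only [zero_smul, add_zero] at h
      rw [image_eq_zero_of_notMem_tsupport fun hmem =>
        h (tsupport_pd_subset _ _ (tsupport_pd_subset _ _ hmem)), mul_zero]
  · filter_upwards [hsupp] with p hp
    refine (integral_eq_intervalIntegral_of_forall_zero hT fun t ht => ?_).symm
    rw [image_eq_zero_of_notMem_tsupport (hp t ht), mul_zero]

lemma hasSecondDeriv_poisson (hψ : ContDiff ℝ (⊤ : ℕ∞) ψ) (hc : HasCompactSupport ψ)
    (X A B : ℝ × ℝ) {Y : ℝ × ℝ} (hY : Y ≠ 0) :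
    HasSecondDeriv (fun p => ∫ t : ℝ, ψ ((X + p • A) + t • (Y + p • B)) / (1 + t ^ 2))
      (∫ t : ℝ, pd (A + t • B) (pd (A + t • B) ψ) (X + t • Y) / (1 + t ^ 2)) := by
  have hw : Continuous fun t : ℝ => (1 + t ^ 2)⁻¹ :=
    Continuous.inv₀ (by fun_prop) fun t => by positivity
  simpa only [div_eq_inv_mul] using hasSecondDeriv_integral_line hψ hc hw X A B hY

/-- The quarter turn `y ↦ y^⊥`. -/
def perp (y : ℝ × ℝ) : ℝ × ℝ := (-y.2, y.1)

lemma normSq_pos_of_ne_zero {y : ℝ × ℝ} (hy : y ≠ 0) : 0 < y.1 ^ 2 + y.2 ^ 2 := by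
  by_contra! h
  have h1 : y.1 = 0 := by nlinarith [sq_nonneg y.1, sq_nonneg y.2]
  have h2 : y.2 = 0 := by nlinarith [sq_nonneg y.1, sq_nonneg y.2]
  exact hy (Prod.ext h1 h2)

lemma integral_pd_pd_line (hψ : ContDiff ℝ (⊤ : ℕ∞) ψ) (hc : HasCompactSupport ψ)
    (X a : ℝ × ℝ) {Y : ℝ × ℝ} (hY : Y ≠ 0) :
    ∫ t : ℝ, pd a (pd a ψ) (X + t • Y) =
      ((a.2 * Y.1 - a.1 * Y.2) / (Y.1 ^ 2 + Y.2 ^ 2)) ^ 2 *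
        ∫ t : ℝ, pd (perp Y) (pd (perp Y) ψ) (X + t • Y) := by
  have hpos := normSq_pos_of_ne_zero hY
  set β := (a.2 * Y.1 - a.1 * Y.2) / (Y.1 ^ 2 + Y.2 ^ 2) with hβ
  set α := (a.1 * Y.1 + a.2 * Y.2) / (Y.1 ^ 2 + Y.2 ^ 2) with hα
  have ha : a = α • Y + β • perp Y := by
    ext <;> simp only [hα, hβ, perp, Prod.fst_add, Prod.snd_add, Prod.smul_fst, Prod.smul_snd,
      smul_eq_mul] <;> field_simp <;> ring
  have hi (u v : ℝ × ℝ) : Integrable fun t : ℝ => pd u (pd v ψ) (X + t • Y) :=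
    integrable_comp_line ((hψ.pd v).pd u).continuous ((hc.pd v).pd u) X hY
  rw [ha]
  simp_rw [pd_pd_vec_add_smul hψ]
  have h12 : Integrable fun t : ℝ => α ^ 2 * pd Y (pd Y ψ) (X + t • Y) +
      2 * α * β * pd Y (pd (perp Y) ψ) (X + t • Y) :=
    ((hi _ _).const_mul _).add ((hi _ _).const_mul _)
  rw [integral_add h12 ((hi _ _).const_mul _),
    integral_add ((hi _ _).const_mul _) ((hi _ _).const_mul _), integral_const_mul,
    integral_const_mul, integral_const_mul,
    integral_pd_line_eq_zero (hψ.pd Y) (hc.pd Y) X hY,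
    integral_pd_line_eq_zero (hψ.pd (perp Y)) (hc.pd (perp Y)) X hY]
  ring

lemma hasSecondDeriv_sqrt (B : ℝ × ℝ) {Y : ℝ × ℝ} (hY : Y ≠ 0) :
    HasSecondDeriv (fun p => √((Y.1 + p * B.1) ^ 2 + (Y.2 + p * B.2) ^ 2))
      ((B.2 * Y.1 - B.1 * Y.2) ^ 2 / (Y.1 ^ 2 + Y.2 ^ 2) / √(Y.1 ^ 2 + Y.2 ^ 2)) := by
  have hpos := normSq_pos_of_ne_zero hY
  have hS (p : ℝ) : HasDerivAt (fun p => (Y.1 + p * B.1) ^ 2 + (Y.2 + p * B.2) ^ 2)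
      (2 * ((Y.1 + p * B.1) * B.1 + (Y.2 + p * B.2) * B.2)) p := by
    have h1 : HasDerivAt (fun p => Y.1 + p * B.1) B.1 p := by
      simpa using ((hasDerivAt_id p).mul_const B.1).const_add Y.1
    have h2 : HasDerivAt (fun p => Y.2 + p * B.2) B.2 p := by
      simpa using ((hasDerivAt_id p).mul_const B.2).const_add Y.2
    refine ((h1.pow 2).add (h2.pow 2)).congr_deriv ?_
    push_cast
    ring
  have hN (p : ℝ) : HasDerivAt (fun p => (Y.1 + p * B.1) * B.1 + (Y.2 + p * B.2) * B.2)
      (B.1 ^ 2 + B.2 ^ 2) p := by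
    have h1 : HasDerivAt (fun p => Y.1 + p * B.1) B.1 p := by
      simpa using ((hasDerivAt_id p).mul_const B.1).const_add Y.1
    have h2 : HasDerivAt (fun p => Y.2 + p * B.2) B.2 p := by
      simpa using ((hasDerivAt_id p).mul_const B.2).const_add Y.2
    exact ((h1.mul_const B.1).add (h2.mul_const B.2)).congr_deriv (by ring)
  have hsq (p : ℝ) (hp : 0 < (Y.1 + p * B.1) ^ 2 + (Y.2 + p * B.2) ^ 2) :
      HasDerivAt (fun p => √((Y.1 + p * B.1) ^ 2 + (Y.2 + p * B.2) ^ 2))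
        (((Y.1 + p * B.1) * B.1 + (Y.2 + p * B.2) * B.2) /
          √((Y.1 + p * B.1) ^ 2 + (Y.2 + p * B.2) ^ 2)) p := by
    refine ((hS p).sqrt hp.ne').congr_deriv ?_
    have := Real.sqrt_pos.2 hp
    field_simp
  have h0 : (0 : ℝ) < (Y.1 + 0 * B.1) ^ 2 + (Y.2 + 0 * B.2) ^ 2 := by simpa using hpos
  refine ⟨fun p => ((Y.1 + p * B.1) * B.1 + (Y.2 + p * B.2) * B.2) /
      √((Y.1 + p * B.1) ^ 2 + (Y.2 + p * B.2) ^ 2), ?_, ?_⟩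
  · filter_upwards [Tendsto.eventually_const_lt h0 (hS 0).continuousAt] with p hp using hsq p hp
  · refine ((hN 0).div (hsq 0 h0) (Real.sqrt_pos.2 h0).ne').congr_deriv ?_
    simp only [zero_mul, add_zero]
    have h1 := Real.sqrt_pos.2 hpos
    have h2 := Real.sq_sqrt hpos.le
    set S := √(Y.1 ^ 2 + Y.2 ^ 2)
    rw [← h2]
    field_simp
    rw [h2]
    ring

end

/-! ### A criterion for plurisubharmonicity -/

/-- The unit vector with angle `θ`. -/
def dirVec (θ : ℝ) : ℝ × ℝ := (cos θ, sin θ)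

/-- The unit normal to the direction with angle `θ`. -/
def normalVec (θ : ℝ) : ℝ × ℝ := (-sin θ, cos θ)

/-- The real part of a point of `ℂ²`. -/
def reVec (z : ℂ × ℂ) : ℝ × ℝ := (z.1.re, z.2.re)

/-- The imaginary part of a point of `ℂ²`. -/
def imVec (z : ℂ × ℂ) : ℝ × ℝ := (z.1.im, z.2.im)

lemma dirVec_ne_zero (θ : ℝ) : dirVec θ ≠ 0 := by
  intro h
  have h1 : cos θ = 0 := congrArg Prod.fst h
  have h2 : sin θ = 0 := congrArg Prod.snd h
  have := sin_sq_add_cos_sq θ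
  simp [h1, h2] at this

lemma xray_eq (ψ : ℝ × ℝ → ℝ) (s θ : ℝ) :
    xray ψ s θ = ∫ t : ℝ, ψ (s • normalVec θ + t • dirVec θ) := by
  unfold xray
  congr 1 with t
  congr 1
  ext <;> simp [normalVec, dirVec] <;> ring

section
variable {ψ ω : ℝ × ℝ → ℝ} {σ : ℝ}

lemma pd_pd_smul (hψ : ContDiff ℝ (⊤ : ℕ∞) ψ) (r : ℝ) (v p : ℝ × ℝ) :
    pd (r • v) (pd (r • v) ψ) p = r ^ 2 * pd v (pd v ψ) p := by
  simpa using pd_pd_vec_add_smul hψ r 0 v v p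

lemma exists_eq_smul_dirVec (Y : ℝ × ℝ) :
    ∃ θ : ℝ, Y = √(Y.1 ^ 2 + Y.2 ^ 2) • dirVec θ := by
  refine ⟨Complex.arg ⟨Y.1, Y.2⟩, ?_⟩
  have hn : √(Y.1 ^ 2 + Y.2 ^ 2) = ‖(⟨Y.1, Y.2⟩ : ℂ)‖ := by
    rw [Complex.norm_def, Complex.normSq_mk, sq, sq]
  ext
  · simp [dirVec, hn, Complex.norm_mul_cos_arg]
  · simp [dirVec, hn, Complex.norm_mul_sin_arg]

lemma integral_pd_perp_line_eq (hω : ContDiff ℝ (⊤ : ℕ∞) ω) (X : ℝ × ℝ) {r : ℝ} (hr : 0 < r)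
    (θ : ℝ) :
    ∫ t : ℝ, pd (perp (r • dirVec θ)) (pd (perp (r • dirVec θ)) ω) (X + t • r • dirVec θ) =
      r * xray (pd (normalVec θ) (pd (normalVec θ) ω)) (X.2 * cos θ - X.1 * sin θ) θ := by
  have hperp : perp (r • dirVec θ) = r • normalVec θ := by
    ext <;> simp [perp, dirVec, normalVec]
  rw [hperp, xray_eq]
  simp_rw [pd_pd_smul hω]
  set F := pd (normalVec θ) (pd (normalVec θ) ω)
  set s := X.2 * cos θ - X.1 * sin θ with hs
  have hX (t : ℝ) : X + t • r • dirVec θ =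
      s • normalVec θ + (r * t + (X.1 * cos θ + X.2 * sin θ)) • dirVec θ := by
    have h := sin_sq_add_cos_sq θ
    ext <;> simp only [hs, normalVec, dirVec, Prod.fst_add, Prod.snd_add, Prod.smul_fst,
      Prod.smul_snd, smul_eq_mul]
    · linear_combination (-X.1) * h
    · linear_combination (-X.2) * h
  simp_rw [hX]
  rw [integral_const_mul,
    Measure.integral_comp_mul_left (fun t => F (s • normalVec θ +
      (t + (X.1 * cos θ + X.2 * sin θ)) • dirVec θ)) r,
    integral_add_right_eq_self (fun t => F (s • normalVec θ + t • dirVec θ)), abs_inv,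
    abs_of_pos hr, smul_eq_mul]
  field_simp

lemma neg_mul_norm_le_integral_perp (hω : ContDiff ℝ (⊤ : ℕ∞) ω)
    (h : ∀ s θ, -(π * σ) ≤ xray (pd (normalVec θ) (pd (normalVec θ) ω)) s θ)
    (X : ℝ × ℝ) {Y : ℝ × ℝ} (hY : Y ≠ 0) :
    -(π * σ) * √(Y.1 ^ 2 + Y.2 ^ 2) ≤ ∫ t : ℝ, pd (perp Y) (pd (perp Y) ω) (X + t • Y) := by
  obtain ⟨θ, hθ⟩ := exists_eq_smul_dirVec Y
  have hr : 0 < √(Y.1 ^ 2 + Y.2 ^ 2) := Real.sqrt_pos.2 (normSq_pos_of_ne_zero hY)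
  set r := √(Y.1 ^ 2 + Y.2 ^ 2)
  rw [hθ, integral_pd_perp_line_eq hω X hr, mul_comm]
  exact mul_le_mul_of_nonneg_left (h _ _) hr.le

lemma uExt_eq (ω : ℝ × ℝ → ℝ) (σ : ℝ) (z : ℂ × ℂ) :
    uExt ω σ z = (1 / π) * (∫ t : ℝ, ω (reVec z + t • imVec z) / (1 + t ^ 2))
      + σ * √((imVec z).1 ^ 2 + (imVec z).2 ^ 2) := rfl

lemma hasSecondDeriv_uExt (hω : ContDiff ℝ (⊤ : ℕ∞) ω) (hc : HasCompactSupport ω) (z v : ℂ × ℂ)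
    (hz : imVec z ≠ 0) : HasSecondDeriv (fun p : ℝ => uExt ω σ (z + (p : ℂ) • v))
      ((1 / π) * (∫ t : ℝ, pd (reVec v + t • imVec v) (pd (reVec v + t • imVec v) ω)
          (reVec z + t • imVec z) / (1 + t ^ 2)) +
        σ * (((imVec v).2 * (imVec z).1 - (imVec v).1 * (imVec z).2) ^ 2 /
          ((imVec z).1 ^ 2 + (imVec z).2 ^ 2) / √((imVec z).1 ^ 2 + (imVec z).2 ^ 2))) := by
  refine (((hasSecondDeriv_poisson hω hc (reVec z) (reVec v) (imVec v) hz).const_mul (1 / π)).add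
    ((hasSecondDeriv_sqrt (imVec v) hz).const_mul σ)).congr (Eventually.of_forall fun p => ?_)
  have hre : reVec (z + (p : ℂ) • v) = reVec z + p • reVec v := by ext <;> simp [reVec]
  have him : imVec (z + (p : ℂ) • v) = imVec z + p • imVec v := by ext <;> simp [imVec]
  simp only [uExt_eq, hre, him, Prod.fst_add, Prod.snd_add, Prod.smul_fst, Prod.smul_snd,
    smul_eq_mul]

lemma integrable_pd_pd_line (hω : ContDiff ℝ (⊤ : ℕ∞) ω) (hc : HasCompactSupport ω)
    (X A B : ℝ × ℝ) {Y : ℝ × ℝ} (hY : Y ≠ 0) :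
    Integrable fun t : ℝ => pd (A + t • B) (pd (A + t • B) ω) (X + t • Y) / (1 + t ^ 2) := by
  obtain ⟨T, -, hT⟩ := exists_uniform_line_support hc X 0 0 hY
  have hxx := ((hω.pd (1, 0)).pd (1, 0)).continuous
  have hxy := ((hω.pd (0, 1)).pd (1, 0)).continuous
  have hyy := ((hω.pd (0, 1)).pd (0, 1)).continuous
  refine Continuous.integrable_of_hasCompactSupport ?_
    (HasCompactSupport.intro (isCompact_closedBall (0 : ℝ) T) fun t ht => ?_)
  · refine Continuous.div ?_ (by fun_prop) fun t => by positivity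
    simp_rw [fun t : ℝ => pd_pd_expand hω (A + t • B)]
    fun_prop
  · have h := hT.self_of_nhds t (by simpa using ht)
    simp only [smul_zero, add_zero] at h
    rw [image_eq_zero_of_notMem_tsupport fun hmem =>
        h (tsupport_pd_subset _ _ (tsupport_pd_subset _ _ hmem)), zero_div]

lemma integral_pd_pd_line_add (hω : ContDiff ℝ (⊤ : ℕ∞) ω) (hc : HasCompactSupport ω)
    (X a b : ℝ × ℝ) {Y : ℝ × ℝ} (hY : Y ≠ 0) :
    (∫ t : ℝ, pd (a + t • b) (pd (a + t • b) ω) (X + t • Y) / (1 + t ^ 2)) +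
      (∫ t : ℝ, pd (-b + t • a) (pd (-b + t • a) ω) (X + t • Y) / (1 + t ^ 2)) =
    (∫ t : ℝ, pd a (pd a ω) (X + t • Y)) + ∫ t : ℝ, pd b (pd b ω) (X + t • Y) := by
  rw [← integral_add (integrable_pd_pd_line hω hc X a b hY)
      (integrable_pd_pd_line hω hc X (-b) a hY),
    ← integral_add
      (integrable_comp_line ((hω.pd a).pd a).continuous ((hc.pd a).pd a) X hY)
      (integrable_comp_line ((hω.pd b).pd b).continuous ((hc.pd b).pd b) X hY)]
  congr 1 with t
  have h1 := pd_pd_vec_add_smul hω 1 t a b (X + t • Y)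
  have h2 := pd_pd_vec_add_smul hω t (-1) a b (X + t • Y)
  rw [one_smul] at h1
  rw [show t • a + (-1 : ℝ) • b = -b + t • a by rw [neg_one_smul, add_comm]] at h2
  rw [h1, h2]
  have : (1 + t ^ 2) ≠ 0 := by positivity
  field_simp
  ring

lemma exists_hasLap_uExt (hω : ContDiff ℝ (⊤ : ℕ∞) ω) (hc : HasCompactSupport ω)
    (h : ∀ s θ, -(π * σ) ≤ xray (pd (normalVec θ) (pd (normalVec θ) ω)) s θ)
    (z v : ℂ × ℂ) (ζ : ℂ) (hz : imVec (z + ζ • v) ≠ 0) :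
    ∃ Δ, 0 ≤ Δ ∧ HasLap (fun ζ => uExt ω σ (z + ζ • v)) Δ ζ := by
  have e1 := hasSecondDeriv_uExt (σ := σ) hω hc _ v hz
  have e2 := hasSecondDeriv_uExt (σ := σ) hω hc _ (Complex.I • v) hz
  refine ⟨_, ?_, _, _, e1.congr (Eventually.of_forall fun p => ?_),
    e2.congr (Eventually.of_forall fun q => ?_), rfl⟩
  · have hre : reVec (Complex.I • v) = -imVec v := by ext <;> simp [reVec, imVec]
    have him : imVec (Complex.I • v) = reVec v := by ext <;> simp [reVec, imVec]
    rw [hre, him]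
    set X := reVec (z + ζ • v)
    set Y := imVec (z + ζ • v)
    set a := reVec v
    set b := imVec v
    have hsum := integral_pd_pd_line_add hω hc X a b hz
    rw [integral_pd_pd_line hω hc X a hz, integral_pd_pd_line hω hc X b hz] at hsum
    have hlow := neg_mul_norm_le_integral_perp hω h X hz
    have hS := normSq_pos_of_ne_zero hz
    have hr := Real.sqrt_pos.2 hS
    have hr2 := Real.sq_sqrt hS.le
    set J := ∫ t : ℝ, pd (perp Y) (pd (perp Y) ω) (X + t • Y)
    set r := √(Y.1 ^ 2 + Y.2 ^ 2)
    rw [← hr2] at hsum ⊢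
    set K := (a.2 * Y.1 - a.1 * Y.2) ^ 2 + (b.2 * Y.1 - b.1 * Y.2) ^ 2 with hK
    have hK0 : 0 ≤ K := by positivity
    have hval : (0 : ℝ) ≤ (1 / π) * (K / (r ^ 2) ^ 2) * (J + π * σ * r) := by
      have : 0 ≤ J + π * σ * r := by linarith
      positivity
    refine hval.trans_eq ?_
    have hJ : (K / (r ^ 2) ^ 2) * J = _ := (show _ = _ by rw [hK]; ring).trans hsum.symm
    rw [mul_add, mul_assoc, hJ, hK]
    field_simp
    ring
  · simp only [add_smul, add_assoc]
  · simp only [add_smul, add_assoc, mul_smul]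

lemma continuous_uExt (hω : Continuous ω) (hc : HasCompactSupport ω) : Continuous (uExt ω σ) := by
  obtain ⟨C, hC⟩ := hω.bounded_above_of_compact_support hc
  unfold uExt
  refine (continuous_const.mul ?_).add (by fun_prop)
  refine continuous_of_dominated (bound := fun t => C * (1 + t ^ 2)⁻¹) (fun z => ?_) (fun z => ?_)
    (integrable_inv_one_add_sq.const_mul C) (Eventually.of_forall fun t => by fun_prop)
  · refine Continuous.aestronglyMeasurable (Continuous.div (by fun_prop) (by fun_prop) ?_)
    intro t
    positivity
  · refine Eventually.of_forall fun t => ?_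
    have : (0 : ℝ) < 1 + t ^ 2 := by positivity
    rw [norm_div, Real.norm_of_nonneg this.le, div_eq_mul_inv]
    gcongr
    exact hC _

lemma uExt_le_mean_of_det_ne_zero (hω : ContDiff ℝ (⊤ : ℕ∞) ω) (hc : HasCompactSupport ω)
    (h : ∀ s θ, -(π * σ) ≤ xray (pd (normalVec θ) (pd (normalVec θ) ω)) s θ)
    (z v : ℂ × ℂ) (hv : v.1.re * v.2.im - v.2.re * v.1.im ≠ 0) :
    uExt ω σ z ≤ (1 / (2 * π)) *
      ∫ θ in (0:ℝ)..(2 * π), uExt ω σ (z + Complex.exp (θ * Complex.I) • v) := by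
  have huniq (ζ ζ' : ℂ) (h1 : imVec (z + ζ • v) = 0) (h2 : imVec (z + ζ' • v) = 0) : ζ = ζ' := by
    have a1 := congrArg Prod.fst h1
    have a2 := congrArg Prod.snd h1
    have b1 := congrArg Prod.fst h2
    have b2 := congrArg Prod.snd h2
    simp [imVec] at a1 a2 b1 b2
    refine Complex.ext (mul_right_cancel₀ hv ?_) (mul_right_cancel₀ hv ?_)
    · linear_combination v.1.re * (a2 - b2) - v.2.re * (a1 - b1)
    · linear_combination v.2.im * (a1 - b1) - v.1.im * (a2 - b2)
  obtain ⟨ζ₀, hζ₀⟩ : ∃ ζ₀ : ℂ, ∀ ζ, ζ ≠ ζ₀ → imVec (z + ζ • v) ≠ 0 := by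
    by_cases hex : ∃ ζ₀ : ℂ, imVec (z + ζ₀ • v) = 0
    · obtain ⟨ζ₀, h0⟩ := hex
      exact ⟨ζ₀, fun ζ hne h1 => hne (huniq _ _ h1 h0)⟩
    · exact ⟨0, fun ζ _ h1 => hex ⟨ζ, h1⟩⟩
  have hcont := continuous_uExt (σ := σ) hω.continuous hc
  simpa using le_circle_mean_of_hasLap (f := fun ζ => uExt ω σ (z + ζ • v)) (by fun_prop)
    fun ζ hζ => exists_hasLap_uExt hω hc h z v ζ (hζ₀ ζ hζ)

/-- `Eω + σ|y|` is plurisubharmonic as soon as the X-ray transforms of the second normal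
derivatives of `ω` are bounded below by `-πσ`. -/
theorem psh_uExt_of_xray_ge (hω : ContDiff ℝ (⊤ : ℕ∞) ω) (hc : HasCompactSupport ω)
    (h : ∀ s θ, -(π * σ) ≤ xray (pd (normalVec θ) (pd (normalVec θ) ω)) s θ) :
    Psh (uExt ω σ) := by
  intro z v
  have hcont := continuous_uExt (σ := σ) hω.continuous hc
  let w : ℝ → ℂ × ℂ := fun ε => v + (ε : ℂ) • ((1, Complex.I) : ℂ × ℂ)
  have hw : Continuous w := by fun_prop
  have hmean : Continuous fun ε : ℝ => (1 / (2 * π)) *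
      ∫ θ in (0:ℝ)..(2 * π), uExt ω σ (z + Complex.exp (θ * Complex.I) • w ε) := by
    refine continuous_const.mul
      (intervalIntegral.continuous_parametric_intervalIntegral_of_continuous' ?_ _ _)
    simp only [Function.uncurry_def]
    fun_prop
  have hdet : ∀ᶠ ε : ℝ in 𝓝[≠] 0, (w ε).1.re * (w ε).2.im - (w ε).2.re * (w ε).1.im ≠ 0 := by
    have hexp (ε : ℝ) : (w ε).1.re * (w ε).2.im - (w ε).2.re * (w ε).1.im =
        (v.1.re * v.2.im - v.2.re * v.1.im) + ε * (ε - -(v.1.re + v.2.im)) := by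
      simp [w]
      ring
    simp_rw [hexp]
    by_cases h0 : v.1.re * v.2.im - v.2.re * v.1.im = 0
    · rw [h0]
      have hne : ∀ᶠ ε : ℝ in 𝓝[≠] 0, ε ≠ -(v.1.re + v.2.im) := by
        by_cases h1 : (0 : ℝ) = -(v.1.re + v.2.im)
        · rw [← h1]
          exact self_mem_nhdsWithin
        · exact (eventually_ne_nhds h1).filter_mono nhdsWithin_le_nhds
      filter_upwards [hne, self_mem_nhdsWithin] with ε h1 h2
      rw [zero_add]
      exact mul_ne_zero h2 (sub_ne_zero.2 h1)
    · refine Eventually.filter_mono nhdsWithin_le_nhds (ContinuousAt.eventually_ne ?_ ?_)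
      · fun_prop
      · simpa using h0
  have hlim := (hmean.tendsto 0).mono_left (nhdsWithin_le_nhds (s := {(0 : ℝ)}ᶜ))
  have := ge_of_tendsto hlim (hdet.mono fun ε hε => uExt_le_mean_of_det_ne_zero hω hc h z _ hε)
  simpa only [w, Complex.ofReal_zero, zero_smul, add_zero] using this

end

/-! ### Central second normal derivatives -/

section
variable {ψ φ Ω : ℝ × ℝ → ℝ}

lemma normSq_smul_dirVec (r θ : ℝ) : (r • dirVec θ).1 ^ 2 + (r • dirVec θ).2 ^ 2 = r ^ 2 := by
  simp only [dirVec, Prod.smul_fst, Prod.smul_snd, smul_eq_mul]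
  linear_combination r ^ 2 * sin_sq_add_cos_sq θ

lemma pd_pd_normSq_mul (hφ : ContDiff ℝ (⊤ : ℕ∞) φ) (t θ : ℝ) :
    pd (normalVec θ) (pd (normalVec θ) fun p => (p.1 ^ 2 + p.2 ^ 2) * φ p) (t • dirVec θ) =
      2 * φ (t • dirVec θ) + t ^ 2 * pd (normalVec θ) (pd (normalVec θ) φ) (t • dirVec θ) := by
  set n := normalVec θ with hn
  have hN : ContDiff ℝ (⊤ : ℕ∞) fun p : ℝ × ℝ => p.1 ^ 2 + p.2 ^ 2 := by fun_prop
  have hL : ContDiff ℝ (⊤ : ℕ∞) fun p : ℝ × ℝ => 2 * (n.1 * p.1 + n.2 * p.2) := by fun_prop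
  have hdN : pd n (fun p : ℝ × ℝ => p.1 ^ 2 + p.2 ^ 2) = fun p => 2 * (n.1 * p.1 + n.2 * p.2) := by
    funext p
    have h1 : HasFDerivAt (fun p : ℝ × ℝ => p.1) (ContinuousLinearMap.fst ℝ ℝ ℝ) p :=
      hasFDerivAt_fst
    have h2 : HasFDerivAt (fun p : ℝ × ℝ => p.2) (ContinuousLinearMap.snd ℝ ℝ ℝ) p :=
      hasFDerivAt_snd
    unfold pd
    rw [((h1.pow 2).fun_add (h2.pow 2)).fderiv]
    simp
    ring
  have hdL : pd n (fun p : ℝ × ℝ => 2 * (n.1 * p.1 + n.2 * p.2)) = fun _ => 2 := by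
    funext p
    have h1 : HasFDerivAt (fun p : ℝ × ℝ => p.1) (ContinuousLinearMap.fst ℝ ℝ ℝ) p :=
      hasFDerivAt_fst
    have h2 : HasFDerivAt (fun p : ℝ × ℝ => p.2) (ContinuousLinearMap.snd ℝ ℝ ℝ) p :=
      hasFDerivAt_snd
    unfold pd
    rw [(((h1.const_mul n.1).fun_add (h2.const_mul n.2)).const_mul 2).fderiv]
    simp [hn, normalVec]
    linear_combination 2 * sin_sq_add_cos_sq θ
  rw [pd_mul n hN hφ, pd_add n ((hN.pd n).mul hφ) (hN.mul (hφ.pd n)), pd_mul n (hN.pd n) hφ,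
    pd_mul n hN (hφ.pd n), hdN, hdL]
  simp only
  rw [normSq_smul_dirVec]
  simp only [hn, normalVec, dirVec, Prod.smul_fst, Prod.smul_snd, smul_eq_mul]
  ring

lemma hasSecondDeriv_inv_sqrt_one_add_sq : HasSecondDeriv (fun p => (√(1 + p ^ 2))⁻¹) (-1) := by
  have hpos (p : ℝ) : (0 : ℝ) < 1 + p ^ 2 := by positivity
  have hsq (p : ℝ) : HasDerivAt (fun p => √(1 + p ^ 2)) (p / √(1 + p ^ 2)) p := by
    have h : HasDerivAt (fun p : ℝ => 1 + p ^ 2) (2 * p) p := by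
      simpa using (hasDerivAt_pow 2 p).const_add 1
    refine (h.sqrt (hpos p).ne').congr_deriv ?_
    field_simp
  refine ⟨fun p => -(p / √(1 + p ^ 2)) / √(1 + p ^ 2) ^ 2, Eventually.of_forall fun p => ?_, ?_⟩
  · exact (hsq p).inv (Real.sqrt_pos.2 (hpos p)).ne'
  · have h1 := ((hasDerivAt_id (0 : ℝ)).div (hsq 0) (by simp)).neg
    refine (h1.div ((hsq 0).pow 2) (by simp)).congr_deriv ?_
    simp

/-- The quadratic weight turns functions with constant central X-ray transform `K` into functions
whose second normal derivatives have central X-ray transform `K`. -/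
lemma xray_pd_pd_normSq_mul (hφ : ContDiff ℝ (⊤ : ℕ∞) φ) (hc : HasCompactSupport φ) {K : ℝ}
    (hK : ∀ θ, xray φ 0 θ = K) (θ : ℝ) :
    xray (pd (normalVec θ) (pd (normalVec θ) fun p => (p.1 ^ 2 + p.2 ^ 2) * φ p)) 0 θ = K := by
  have hline (r : ℝ) (hr : 0 < r) (η : ℝ) : ∫ t : ℝ, φ (t • r • dirVec η) = r⁻¹ * K := by
    have h := hK η
    rw [xray_eq] at h
    simp only [zero_smul, zero_add] at h
    rw [← h]
    have := Measure.integral_comp_mul_right (fun t : ℝ => φ (t • dirVec η)) r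
    simp only [mul_smul, abs_inv, abs_of_pos hr, smul_eq_mul] at this
    exact this
  have h2 := hasSecondDeriv_integral_line hφ hc (continuous_const (y := (1 : ℝ))) 0 0
    (normalVec θ) (dirVec_ne_zero θ)
  simp only [one_mul, smul_zero, zero_add, pd_pd_smul hφ] at h2
  have hval (p : ℝ) : ∫ t : ℝ, φ (t • (dirVec θ + p • normalVec θ)) = K * (√(1 + p ^ 2))⁻¹ := by
    obtain ⟨η, hη⟩ := exists_eq_smul_dirVec (dirVec θ + p • normalVec θ)
    have hn : (dirVec θ + p • normalVec θ).1 ^ 2 + (dirVec θ + p • normalVec θ).2 ^ 2 =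
        1 + p ^ 2 := by
      simp only [dirVec, normalVec, Prod.fst_add, Prod.snd_add, Prod.smul_fst, Prod.smul_snd,
        smul_eq_mul]
      linear_combination (1 + p ^ 2) * sin_sq_add_cos_sq θ
    rw [hη, hn, hline _ (Real.sqrt_pos.2 (by positivity)), mul_comm]
  simp only [hval] at h2
  have h3 := h2.unique (hasSecondDeriv_inv_sqrt_one_add_sq.const_mul K)
  rw [xray_eq]
  have h0 := hK θ
  rw [xray_eq] at h0
  simp only [zero_smul, zero_add] at h0 ⊢
  simp_rw [pd_pd_normSq_mul hφ]
  have hi1 : Integrable fun t : ℝ => φ (t • dirVec θ) := by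
    simpa using integrable_comp_line hφ.continuous hc 0 (dirVec_ne_zero θ)
  have hi2 : Integrable fun t : ℝ =>
      t ^ 2 * pd (normalVec θ) (pd (normalVec θ) φ) (t • dirVec θ) := by
    have hcont := ((hφ.pd (normalVec θ)).pd (normalVec θ)).continuous
    refine Continuous.integrable_of_hasCompactSupport (by fun_prop) ?_
    have := hasCompactSupport_comp_line ((hc.pd (normalVec θ)).pd (normalVec θ)) 0
      (dirVec_ne_zero θ)
    simp only [zero_add] at this
    exact this.mul_left
  rw [integral_add (hi1.const_mul 2) hi2, integral_const_mul, h0, h3]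
  ring

/-! ### Weighted radial means -/

/-- The weighted radial mean `x ↦ ∫_{-4}^4 w(t) Ω(tx) dt`. -/
def radialMean (w : ℝ → ℝ) (Ω : ℝ × ℝ → ℝ) (x : ℝ × ℝ) : ℝ := ∫ t in (-4 : ℝ)..4, w t * Ω (t • x)

lemma hasFDerivAt_radialMean {w : ℝ → ℝ} (hw : Continuous w) (hΩ : ContDiff ℝ (⊤ : ℕ∞) Ω)
    (x : ℝ × ℝ) : HasFDerivAt (radialMean w Ω)
      (∫ t in (-4 : ℝ)..4, (w t * t) • fderiv ℝ Ω (t • x)) x := by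
  have hΩc := hΩ.continuous
  have hd : Continuous (fderiv ℝ Ω) := hΩ.continuous_fderiv (by simp)
  obtain ⟨M, hM⟩ := ((isCompact_closedBall x 1).prod
    (isCompact_uIcc (a := (-4 : ℝ)) (b := 4))).bddAbove_image
    (f := fun z : (ℝ × ℝ) × ℝ => ‖(w z.2 * z.2) • fderiv ℝ Ω (z.2 • z.1)‖) (by fun_prop)
  refine intervalIntegral.hasFDerivAt_integral_of_dominated_of_fderiv_le
    (F' := fun x t => (w t * t) • fderiv ℝ Ω (t • x))
    (bound := fun _ => M) (Metric.closedBall_mem_nhds x one_pos)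
    (Eventually.of_forall fun q => Continuous.aestronglyMeasurable (by fun_prop))
    (Continuous.intervalIntegrable (by fun_prop) _ _) ?_ ?_ (by simp) ?_
  · exact Continuous.aestronglyMeasurable (by fun_prop)
  · exact Eventually.of_forall fun t ht q hq => hM ⟨(q, t), ⟨hq, Set.uIoc_subset_uIcc ht⟩, rfl⟩
  · refine Eventually.of_forall fun t _ q _ => ?_
    have h := ((smooth_differentiable hΩ (t • q)).hasFDerivAt.comp q
      ((hasFDerivAt_id (𝕜 := ℝ) q).const_smul t)).const_mul (w t)
    refine h.congr_fderiv ?_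
    ext <;> simp [mul_assoc]

lemma pd_radialMean {w : ℝ → ℝ} (hw : Continuous w) (hΩ : ContDiff ℝ (⊤ : ℕ∞) Ω) (v : ℝ × ℝ) :
    pd v (radialMean w Ω) = radialMean (fun t => w t * t) (pd v Ω) := by
  funext x
  have hd : Continuous (fderiv ℝ Ω) := hΩ.continuous_fderiv (by simp)
  unfold pd
  rw [(hasFDerivAt_radialMean hw hΩ x).fderiv, ContinuousLinearMap.intervalIntegral_apply]
  · rfl
  · exact Continuous.intervalIntegrable (by fun_prop) _ _

lemma contDiff_radialMean {w : ℝ → ℝ} (hw : Continuous w) (hΩ : ContDiff ℝ (⊤ : ℕ∞) Ω) :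
    ContDiff ℝ (⊤ : ℕ∞) (radialMean w Ω) := by
  refine contDiff_infty.2 fun n => ?_
  induction n generalizing w Ω with
  | zero =>
    have : Differentiable ℝ (radialMean w Ω) := fun x =>
      (hasFDerivAt_radialMean hw hΩ x).differentiableAt
    exact contDiff_zero.2 this.continuous
  | succ n ih =>
    push_cast
    refine contDiff_succ_iff_fderiv_apply.2
      ⟨fun x => (hasFDerivAt_radialMean hw hΩ x).differentiableAt, by simp, fun v => ?_⟩
    have := ih (w := fun t => w t * t) (by fun_prop) (hΩ.pd v)
    rw [← pd_radialMean hw hΩ v] at this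
    exact this

lemma abs_radialMean_le {w : ℝ → ℝ} {W C : ℝ} (hw : ∀ t, |t| ≤ 4 → |w t| ≤ W)
    (hΩ : ∀ p, |Ω p| ≤ C) (x : ℝ × ℝ) : |radialMean w Ω x| ≤ 8 * (W * C) := by
  have h := intervalIntegral.norm_integral_le_of_norm_le_const (a := (-4 : ℝ)) (b := 4)
    (f := fun t => w t * Ω (t • x)) (C := W * C) fun t ht => ?_
  · rw [Real.norm_eq_abs] at h
    refine h.trans_eq ?_
    norm_num
    ring
  · rw [Set.uIoc_of_le (by norm_num)] at ht
    have := hw t (abs_le.2 ⟨ht.1.le, ht.2⟩)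
    rw [norm_mul, Real.norm_eq_abs, Real.norm_eq_abs]
    exact mul_le_mul this (hΩ _) (abs_nonneg _) ((abs_nonneg _).trans this)

end

/-! ### Bounds on normal derivatives -/

/-- `ψ` and its unit directional derivatives of order at most three are bounded by `C`. -/
def NormalBound (ψ : ℝ × ℝ → ℝ) (C : ℝ) : Prop :=
  ∀ θ p, |ψ p| ≤ C ∧ |pd (normalVec θ) ψ p| ≤ C ∧
    |pd (normalVec θ) (pd (normalVec θ) ψ) p| ≤ C ∧
    |pd (normalVec θ) (pd (normalVec θ) (pd (normalVec θ) ψ)) p| ≤ C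

section
variable {ψ φ Ω : ℝ × ℝ → ℝ} {C D : ℝ}

lemma abs_normalVec_fst_le (θ : ℝ) : |(normalVec θ).1| ≤ 1 := by
  simpa [normalVec] using abs_sin_le_one θ

lemma abs_normalVec_snd_le (θ : ℝ) : |(normalVec θ).2| ≤ 1 := abs_cos_le_one θ

lemma NormalBound.nonneg (h : NormalBound ψ C) : 0 ≤ C :=
  (abs_nonneg _).trans (h 0 0).1

lemma abs_mul_le_of_abs_le_one {c x K : ℝ} (hc : |c| ≤ 1) (hx : |x| ≤ K) : |c * x| ≤ K := by
  rw [abs_mul]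
  exact (mul_le_of_le_one_left (abs_nonneg x) hc).trans hx

/-- Bounds on the coordinate derivatives of order at most three give a `NormalBound`. -/
lemma NormalBound.of_coordinates (hψ : ContDiff ℝ (⊤ : ℕ∞) ψ)
    (h : ∀ γ₁ γ₂ : ℕ, γ₁ + γ₂ ≤ 3 → ∀ p, |(pd (1, 0))^[γ₁] ((pd (0, 1))^[γ₂] ψ) p| ≤ C) :
    NormalBound ψ (8 * C) := by
  intro θ p
  have hC : 0 ≤ C := (abs_nonneg _).trans (h 0 0 (by norm_num) p)
  have h1 := abs_normalVec_fst_le θ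
  have h2 := abs_normalVec_snd_le θ
  have hm {a b : ℝ} (ha : |a| ≤ 1) (hb : |b| ≤ 1) : |a * b| ≤ 1 := abs_mul_le_of_abs_le_one ha hb
  set a := (normalVec θ).1 with ha
  set b := (normalVec θ).2 with hb
  refine ⟨(h 0 0 (by norm_num) p).trans (by linarith), ?_, ?_, ?_⟩
  · have e1 := abs_le.1 (abs_mul_le_of_abs_le_one h1 (h 1 0 (by norm_num) p))
    have e2 := abs_le.1 (abs_mul_le_of_abs_le_one h2 (h 0 1 (by norm_num) p))
    simp only [Function.iterate_succ, Function.iterate_zero, Function.comp, id] at e1 e2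
    rw [pd_expand, ← ha, ← hb, abs_le]
    constructor <;> linarith
  · have e1 := abs_le.1 (abs_mul_le_of_abs_le_one (hm h1 h1) (h 2 0 (by norm_num) p))
    have e2 := abs_le.1 (abs_mul_le_of_abs_le_one (hm h1 h2) (h 1 1 (by norm_num) p))
    have e3 := abs_le.1 (abs_mul_le_of_abs_le_one (hm h2 h2) (h 0 2 (by norm_num) p))
    simp only [Function.iterate_succ, Function.iterate_zero, Function.comp, id] at e1 e2 e3
    rw [pd_pd_expand hψ, ← ha, ← hb, abs_le]
    constructor <;> nlinarith
  · have e1 := abs_le.1 (abs_mul_le_of_abs_le_one (hm h1 (hm h1 h1)) (h 3 0 (by norm_num) p))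
    have e2 := abs_le.1 (abs_mul_le_of_abs_le_one (hm h1 (hm h1 h2)) (h 2 1 (by norm_num) p))
    have e3 := abs_le.1 (abs_mul_le_of_abs_le_one (hm h1 (hm h2 h2)) (h 1 2 (by norm_num) p))
    have e4 := abs_le.1 (abs_mul_le_of_abs_le_one (hm h2 (hm h2 h2)) (h 0 3 (by norm_num) p))
    simp only [Function.iterate_succ, Function.iterate_zero, Function.comp, id] at e1 e2 e3 e4
    rw [pd_pd_pd_expand hψ, ← ha, ← hb, abs_le]
    constructor <;> nlinarith

lemma exists_normalBound (hψ : ContDiff ℝ (⊤ : ℕ∞) ψ) (hc : HasCompactSupport ψ) :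
    ∃ C, NormalBound ψ C := by
  have hit (v : ℝ × ℝ) (γ : ℕ) {φ : ℝ × ℝ → ℝ}
      (h : ContDiff ℝ (⊤ : ℕ∞) φ ∧ HasCompactSupport φ) :
      ContDiff ℝ (⊤ : ℕ∞) ((pd v)^[γ] φ) ∧ HasCompactSupport ((pd v)^[γ] φ) := by
    induction γ with
    | zero => exact h
    | succ γ ih =>
      rw [Function.iterate_succ_apply']
      exact ⟨ih.1.pd v, ih.2.pd v⟩
  have hb (γ₁ γ₂ : ℕ) : ∃ C, ∀ p, |(pd (1, 0))^[γ₁] ((pd (0, 1))^[γ₂] ψ) p| ≤ C := by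
    obtain ⟨h1, h2⟩ := hit (1, 0) γ₁ (hit (0, 1) γ₂ ⟨hψ, hc⟩)
    exact h1.continuous.bounded_above_of_compact_support h2
  choose M hM using hb
  have hM0 (γ₁ γ₂ : ℕ) : 0 ≤ M γ₁ γ₂ := (abs_nonneg _).trans (hM γ₁ γ₂ 0)
  refine ⟨_, NormalBound.of_coordinates (C := ∑ i ∈ Finset.range 4, ∑ j ∈ Finset.range 4, M i j)
    hψ fun γ₁ γ₂ h p => (hM γ₁ γ₂ p).trans ?_⟩
  refine (Finset.single_le_sum (f := fun j => M γ₁ j) (fun j _ => hM0 γ₁ j)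
    (Finset.mem_range.2 (by omega : γ₂ < 4))).trans ?_
  exact Finset.single_le_sum (f := fun i => ∑ j ∈ Finset.range 4, M i j)
    (fun i _ => Finset.sum_nonneg fun j _ => hM0 i j) (Finset.mem_range.2 (by omega : γ₁ < 4))

lemma NormalBound.add (hψ : ContDiff ℝ (⊤ : ℕ∞) ψ) (hφ : ContDiff ℝ (⊤ : ℕ∞) φ)
    (h : NormalBound ψ C) (h' : NormalBound φ D) : NormalBound (fun p => ψ p + φ p) (C + D) := by
  intro θ p
  obtain ⟨a0, a1, a2, a3⟩ := h θ p
  obtain ⟨b0, b1, b2, b3⟩ := h' θ p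
  set n := normalVec θ
  have e1 := pd_add n hψ hφ
  have e2 := pd_add n (hψ.pd n) (hφ.pd n)
  have e3 := pd_add n ((hψ.pd n).pd n) ((hφ.pd n).pd n)
  rw [e1, e2, e3]
  exact ⟨(abs_add_le _ _).trans (add_le_add a0 b0), (abs_add_le _ _).trans (add_le_add a1 b1),
    (abs_add_le _ _).trans (add_le_add a2 b2), (abs_add_le _ _).trans (add_le_add a3 b3)⟩

lemma NormalBound.const (c : ℝ) : NormalBound (fun _ => c) |c| := by
  intro θ p
  have h (v : ℝ × ℝ) (d : ℝ) : pd v (fun _ => d) = fun _ => 0 := by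
    funext p
    simp [_root_.pd]
  simp [h]

lemma NormalBound.const_mul (c : ℝ) (hψ : ContDiff ℝ (⊤ : ℕ∞) ψ) (h : NormalBound ψ C) :
    NormalBound (fun p => c * ψ p) (|c| * C) := by
  intro θ p
  obtain ⟨a0, a1, a2, a3⟩ := h θ p
  set n := normalVec θ
  rw [pd_const_mul n c hψ, pd_const_mul n c (hψ.pd n), pd_const_mul n c ((hψ.pd n).pd n)]
  simp only [abs_mul]
  exact ⟨by gcongr, by gcongr, by gcongr, by gcongr⟩

lemma NormalBound.mul (hψ : ContDiff ℝ (⊤ : ℕ∞) ψ) (hφ : ContDiff ℝ (⊤ : ℕ∞) φ)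
    (h : NormalBound ψ C) (h' : NormalBound φ D) :
    NormalBound (fun p => ψ p * φ p) (8 * (C * D)) := by
  intro θ p
  have hCD : 0 ≤ C * D := mul_nonneg h.nonneg h'.nonneg
  have hC := h.nonneg
  have hmul {x y : ℝ} (hx : |x| ≤ C) (hy : |y| ≤ D) : -(C * D) ≤ x * y ∧ x * y ≤ C * D := by
    rw [← abs_le, abs_mul]
    exact mul_le_mul hx hy (abs_nonneg _) hC
  obtain ⟨a0, a1, a2, a3⟩ := h θ p
  obtain ⟨b0, b1, b2, b3⟩ := h' θ p
  set n := normalVec θ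
  have s1 := hψ.pd n
  have s2 := s1.pd n
  have s3 := s2.pd n
  have t1 := hφ.pd n
  have t2 := t1.pd n
  have t3 := t2.pd n
  rw [pd_mul n hψ hφ, pd_add n (s1.mul hφ) (hψ.mul t1), pd_mul n s1 hφ, pd_mul n hψ t1,
    pd_add n ((s2.mul hφ).add (s1.mul t1)) ((s1.mul t1).add (hψ.mul t2)),
    pd_add n (s2.mul hφ) (s1.mul t1), pd_add n (s1.mul t1) (hψ.mul t2), pd_mul n s2 hφ,
    pd_mul n s1 t1, pd_mul n hψ t2]
  have m00 := hmul a0 b0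
  have m10 := hmul a1 b0
  have m01 := hmul a0 b1
  have m20 := hmul a2 b0
  have m11 := hmul a1 b1
  have m02 := hmul a0 b2
  have m30 := hmul a3 b0
  have m21 := hmul a2 b1
  have m12 := hmul a1 b2
  have m03 := hmul a0 b3
  simp only [abs_le]
  refine ⟨⟨?_, ?_⟩, ⟨?_, ?_⟩, ⟨?_, ?_⟩, ⟨?_, ?_⟩⟩ <;> linarith [m00.1, m00.2, m10.1, m10.2, m01.1,
    m01.2, m20.1, m20.2, m11.1, m11.2, m02.1, m02.2, m30.1, m30.2, m21.1, m21.2, m12.1, m12.2,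
    m03.1, m03.2]

lemma NormalBound.radialMean {w : ℝ → ℝ} {W : ℝ} (hw : Continuous w)
    (hW : ∀ t, |t| ≤ 4 → |w t| ≤ W) (hΩ : ContDiff ℝ (⊤ : ℕ∞) Ω) (h : NormalBound Ω C) :
    NormalBound (radialMean w Ω) (512 * (W * C)) := by
  intro θ p
  have hW0 : 0 ≤ W := (abs_nonneg _).trans (hW 0 (by norm_num))
  have hWC : 0 ≤ W * C := mul_nonneg hW0 h.nonneg
  set n := normalVec θ
  rw [pd_radialMean hw hΩ, pd_radialMean (by fun_prop) (hΩ.pd n),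
    pd_radialMean (by fun_prop) ((hΩ.pd n).pd n)]
  have hstep {w : ℝ → ℝ} {W : ℝ} (hW : ∀ t, |t| ≤ 4 → |w t| ≤ W) :
      ∀ t, |t| ≤ 4 → |w t * t| ≤ W * 4 := fun t ht => by
    rw [abs_mul]
    exact mul_le_mul (hW t ht) ht (abs_nonneg _) ((abs_nonneg _).trans (hW t ht))
  refine ⟨(abs_radialMean_le hW (fun p => (h θ p).1) p).trans ?_,
    (abs_radialMean_le (hstep hW) (fun p => (h θ p).2.1) p).trans ?_,
    (abs_radialMean_le (hstep (hstep hW)) (fun p => (h θ p).2.2.1) p).trans ?_,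
    (abs_radialMean_le (hstep (hstep (hstep hW))) (fun p => (h θ p).2.2.2) p).trans ?_⟩ <;>
  linarith

end

/-! ### The correction at unit scale -/

section
variable {ψ Ω : ℝ × ℝ → ℝ}

lemma mem_annulus_zero {p : ℝ × ℝ} :
    p ∈ annulus 0 ↔ 1 / 4 ≤ p.1 ^ 2 + p.2 ^ 2 ∧ p.1 ^ 2 + p.2 ^ 2 ≤ 4 := by
  have h0 : 0 ≤ p.1 ^ 2 + p.2 ^ 2 := by positivity
  simp only [annulus, Set.mem_ofPred_eq]
  rw [Real.le_sqrt' (by positivity), Real.sqrt_le_left (by positivity)]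
  norm_num

lemma isClosed_annulus (k : ℕ) : IsClosed (annulus k) := by
  have h1 : IsClosed {p : ℝ × ℝ | (2 : ℝ) ^ ((k : ℤ) - 1) ≤ √(p.1 ^ 2 + p.2 ^ 2)} :=
    isClosed_le continuous_const (by fun_prop)
  have h2 : IsClosed {p : ℝ × ℝ | √(p.1 ^ 2 + p.2 ^ 2) ≤ (2 : ℝ) ^ (k + 1)} :=
    isClosed_le (by fun_prop) continuous_const
  exact h1.inter h2

lemma zero_notMem_annulus (k : ℕ) : (0 : ℝ × ℝ) ∉ annulus k := by
  intro h
  have h1 := h.1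
  have : (0 : ℝ) < 2 ^ ((k : ℤ) - 1) := by positivity
  simp at h1
  linarith

lemma invSq_eventuallyEq_zero (h0 : (0 : ℝ × ℝ) ∉ tsupport ψ) : invSq ψ =ᶠ[𝓝 0] fun _ => 0 := by
  filter_upwards [notMem_tsupport_iff_eventuallyEq.1 h0] with p hp
  simp [invSq, hp]

lemma contDiff_invSq (hψ : ContDiff ℝ (⊤ : ℕ∞) ψ) (h0 : (0 : ℝ × ℝ) ∉ tsupport ψ) :
    ContDiff ℝ (⊤ : ℕ∞) (invSq ψ) := by
  refine contDiff_iff_contDiffAt.2 fun p => ?_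
  by_cases hp : p = 0
  · subst hp
    exact contDiffAt_const.congr_of_eventuallyEq (invSq_eventuallyEq_zero h0)
  · have hN : ContDiff ℝ (⊤ : ℕ∞) fun p : ℝ × ℝ => p.1 ^ 2 + p.2 ^ 2 := by fun_prop
    exact (hN.contDiffAt.inv (normSq_pos_of_ne_zero hp).ne').mul hψ.contDiffAt

lemma hasCompactSupport_invSq (hc : HasCompactSupport ψ) : HasCompactSupport (invSq ψ) :=
  hc.mul_left

lemma normSq_mul_invSq (h0 : (0 : ℝ × ℝ) ∉ tsupport ψ) :
    (fun p => (p.1 ^ 2 + p.2 ^ 2) * invSq ψ p) = ψ := by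
  funext p
  by_cases hp : p = 0
  · subst hp
    simp [image_eq_zero_of_notMem_tsupport h0]
  · exact mul_inv_cancel_left₀ (normSq_pos_of_ne_zero hp).ne' _

/-- A continuous weight that agrees with `t⁻²` for `|t| ≥ 1/4`. -/
def invSqWeight (t : ℝ) : ℝ := (max (t ^ 2) (1 / 16))⁻¹

lemma continuous_invSqWeight : Continuous invSqWeight :=
  Continuous.inv₀ (by fun_prop) fun t => (lt_max_of_lt_right (by norm_num)).ne'

lemma abs_invSqWeight_le (t : ℝ) : |invSqWeight t| ≤ 16 := by
  have h : (1 / 16 : ℝ) ≤ max (t ^ 2) (1 / 16) := le_max_right _ _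
  rw [invSqWeight, abs_of_nonneg (inv_nonneg.2 (by linarith))]
  exact inv_le_of_inv_le₀ (by norm_num) (by linarith)

lemma radialMean_smul_dirVec (hs : tsupport Ω ⊆ annulus 0) {r : ℝ} (hr : 1 / 2 ≤ |r|)
    (hr' : |r| ≤ 2) (θ : ℝ) :
    radialMean invSqWeight Ω (r • dirVec θ) = |r| * xray (invSq Ω) 0 θ := by
  have hr0 : 0 < |r| := by linarith
  have hsq : 1 / 4 ≤ r ^ 2 := by rw [← sq_abs]; nlinarith
  have hsq' : r ^ 2 ≤ 4 := by rw [← sq_abs]; nlinarith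
  have hout (u : ℝ) (hu : ¬(1 / 4 ≤ u ^ 2 ∧ u ^ 2 ≤ 4)) : Ω (u • dirVec θ) = 0 := by
    refine image_eq_zero_of_notMem_tsupport fun hmem => hu ?_
    have := mem_annulus_zero.1 (hs hmem)
    rwa [normSq_smul_dirVec] at this
  have hInt (t : ℝ) : invSqWeight t * Ω (t • r • dirVec θ) =
      r ^ 2 * invSq Ω ((t * r) • dirVec θ) := by
    rw [invSq, normSq_smul_dirVec, smul_smul]
    by_cases h : 1 / 4 ≤ (t * r) ^ 2 ∧ (t * r) ^ 2 ≤ 4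
    · have ht : 1 / 16 ≤ t ^ 2 := by
        have h1 := h.1
        rw [mul_pow] at h1
        nlinarith [sq_nonneg t]
      rw [invSqWeight, max_eq_left ht]
      have h1 : t ≠ 0 := by
        rintro rfl
        norm_num at ht
      have h2 : r ≠ 0 := abs_pos.1 hr0
      rw [mul_pow]
      field_simp
    · rw [hout _ h]
      simp
  have hxr := xray_eq (invSq Ω) 0 θ
  simp only [zero_smul, zero_add] at hxr
  rw [radialMean, ← integral_eq_intervalIntegral_of_forall_zero (by norm_num)]
  · simp_rw [hInt]
    rw [integral_const_mul, Measure.integral_comp_mul_right (fun u => invSq Ω (u • dirVec θ)),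
      hxr, smul_eq_mul, abs_inv, ← sq_abs]
    field_simp
  · intro t ht
    rw [smul_smul, hout, mul_zero]
    rintro ⟨-, h⟩
    have : 16 < t ^ 2 := by rw [← sq_abs]; nlinarith
    rw [mul_pow] at h
    nlinarith

lemma exists_annular_bump : ∃ A : ℝ × ℝ → ℝ, ∃ c : ℝ, ContDiff ℝ (⊤ : ℕ∞) A ∧
    HasCompactSupport A ∧ tsupport A ⊆ annulus 0 ∧ (∀ p, 0 ≤ A p) ∧ 0 ≤ c ∧
    (∀ θ, xray (invSq A) 0 θ = c) ∧ ∀ θ, ∫ t : ℝ, invSq A (t • dirVec θ) * |t| = 1 := by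
  let β : ContDiffBump (1 : ℝ) := ⟨1 / 4, 1 / 2, by norm_num, by norm_num⟩
  let B : ℝ × ℝ → ℝ := fun p => β (p.1 ^ 2 + p.2 ^ 2)
  have hB : ContDiff ℝ (⊤ : ℕ∞) B := β.contDiff.comp (by fun_prop)
  have hsupp : tsupport B ⊆ annulus 0 := by
    refine closure_minimal (fun p hp => ?_) (isClosed_annulus 0)
    have hp' : p.1 ^ 2 + p.2 ^ 2 ∈ Function.support β := hp
    rw [β.support_eq, Real.ball_eq_Ioo] at hp'
    have : β.rOut = 1 / 2 := rfl
    rw [this] at hp'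
    exact mem_annulus_zero.2 ⟨by linarith [hp'.1], by linarith [hp'.2]⟩
  have h0 : (0 : ℝ × ℝ) ∉ tsupport B := fun h => zero_notMem_annulus 0 (hsupp h)
  have hc : HasCompactSupport B := by
    refine HasCompactSupport.of_support_subset_isCompact (isCompact_closedBall 0 2) fun p hp => ?_
    have h := mem_annulus_zero.1 (hsupp (subset_tsupport _ hp))
    rw [mem_closedBall_zero_iff, Prod.norm_def, max_le_iff, Real.norm_eq_abs, Real.norm_eq_abs]
    constructor <;> refine abs_le_of_sq_le_sq (by nlinarith [sq_nonneg p.1, sq_nonneg p.2])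
      (by norm_num)
  have hB0 (p : ℝ × ℝ) : 0 ≤ B p := β.nonneg
  have hi : Continuous (invSq B) := (contDiff_invSq hB h0).continuous
  have hline (θ t : ℝ) : invSq B (t • dirVec θ) = (t ^ 2)⁻¹ * β (t ^ 2) := by
    simp only [invSq, B, normSq_smul_dirVec]
  let m : ℝ → ℝ := fun t => (t ^ 2)⁻¹ * β (t ^ 2) * |t|
  have hm0 (t : ℝ) : 0 ≤ m t := mul_nonneg (mul_nonneg (by positivity) β.nonneg) (abs_nonneg t)
  have hm : m = fun t => invSq B (t • dirVec 0) * |t| := funext fun t => by rw [hline]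
  have hmcont : Continuous m := by rw [hm]; fun_prop
  have hmsupp : HasCompactSupport m := by
    have := hasCompactSupport_comp_line (hasCompactSupport_invSq hc) 0 (dirVec_ne_zero 0)
    simp only [zero_add] at this
    rw [hm]
    exact this.mul_right
  have hM : 0 < ∫ t, m t := by
    refine hmcont.integral_pos_of_hasCompactSupport_nonneg_nonzero hmsupp hm0 (x := 1) ?_
    simp [m, β.one_of_mem_closedBall (x := 1) (by simp [β])]
  set M := ∫ t, m t
  refine ⟨fun p => M⁻¹ * B p, M⁻¹ * ∫ t : ℝ, (t ^ 2)⁻¹ * β (t ^ 2), contDiff_const.mul hB,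
    hc.mul_left, (closure_mono (Function.support_mul_subset_right _ _)).trans hsupp,
    fun p => mul_nonneg (by positivity) (hB0 p),
    mul_nonneg (by positivity) (integral_nonneg fun t => mul_nonneg (by positivity) β.nonneg),
    fun θ => ?_, fun θ => ?_⟩
  · rw [xray_eq, ← integral_const_mul]
    congr 1 with t
    rw [zero_smul, zero_add, ← hline θ]
    simp only [invSq]
    ring
  · have h (t : ℝ) : invSq (fun p => M⁻¹ * B p) (t • dirVec θ) * |t| = M⁻¹ * m t := by
      simp only [m]
      rw [← hline θ]
      simp only [invSq]
      ring
    simp_rw [h]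
    rw [integral_const_mul]
    exact inv_mul_cancel₀ hM.ne'

lemma normSq_normal_add_dir (s t θ : ℝ) :
    (s • normalVec θ + t • dirVec θ).1 ^ 2 + (s • normalVec θ + t • dirVec θ).2 ^ 2 =
      s ^ 2 + t ^ 2 := by
  simp only [dirVec, normalVec, Prod.fst_add, Prod.snd_add, Prod.smul_fst, Prod.smul_snd,
    smul_eq_mul]
  linear_combination (s ^ 2 + t ^ 2) * sin_sq_add_cos_sq θ

lemma pd_pd_eq_zero_of_four_lt (hs : tsupport ψ ⊆ annulus 0) (v : ℝ × ℝ) {p : ℝ × ℝ}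
    (hp : 4 < p.1 ^ 2 + p.2 ^ 2) : pd v (pd v ψ) p = 0 := by
  refine image_eq_zero_of_notMem_tsupport fun hmem => ?_
  have := (mem_annulus_zero.1 (hs (tsupport_pd_subset _ _ (tsupport_pd_subset _ _ hmem)))).2
  linarith

lemma xray_pd_pd_eq_zero (hs : tsupport ψ ⊆ annulus 0) {s : ℝ} (h : 2 < |s|) (θ : ℝ) :
    xray (pd (normalVec θ) (pd (normalVec θ) ψ)) s θ = 0 := by
  rw [xray_eq]
  refine integral_eq_zero_of_ae (Eventually.of_forall fun t => pd_pd_eq_zero_of_four_lt hs _ ?_)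
  rw [normSq_normal_add_dir, ← sq_abs s]
  nlinarith [sq_nonneg t]

lemma xray_pd_pd_eq_intervalIntegral (hs : tsupport ψ ⊆ annulus 0) (s θ : ℝ) :
    xray (pd (normalVec θ) (pd (normalVec θ) ψ)) s θ =
      ∫ t in (-2 : ℝ)..2,
        pd (normalVec θ) (pd (normalVec θ) ψ) (s • normalVec θ + t • dirVec θ) := by
  rw [xray_eq]
  refine integral_eq_intervalIntegral_of_forall_zero (by norm_num) fun t ht =>
    pd_pd_eq_zero_of_four_lt hs _ ?_
  rw [normSq_normal_add_dir, ← sq_abs t]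
  nlinarith [sq_nonneg s]

lemma abs_xray_pd_pd_sub_le (hψ : ContDiff ℝ (⊤ : ℕ∞) ψ) (hs : tsupport ψ ⊆ annulus 0) {C : ℝ}
    (hC : NormalBound ψ C) (s θ : ℝ) :
    |xray (pd (normalVec θ) (pd (normalVec θ) ψ)) s θ -
      xray (pd (normalVec θ) (pd (normalVec θ) ψ)) 0 θ| ≤ 4 * C * |s| := by
  rw [xray_pd_pd_eq_intervalIntegral hs, xray_pd_pd_eq_intervalIntegral hs]
  set n := normalVec θ with hn
  have hF := (hψ.pd n).pd n
  have hFc := hF.continuous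
  rw [← intervalIntegral.integral_sub (Continuous.intervalIntegrable (by fun_prop) _ _)
    (Continuous.intervalIntegrable (by fun_prop) _ _)]
  have h := intervalIntegral.norm_integral_le_of_norm_le_const (a := (-2 : ℝ)) (b := 2)
    (f := fun t => pd n (pd n ψ) (s • n + t • dirVec θ) -
      pd n (pd n ψ) ((0 : ℝ) • n + t • dirVec θ)) (C := C * |s|) fun t _ => ?_
  · rw [Real.norm_eq_abs] at h
    refine h.trans_eq ?_
    norm_num
    ring
  · have hd (u : ℝ) : HasDerivWithinAt (fun u : ℝ => pd n (pd n ψ) (u • n + t • dirVec θ))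
        (pd n (pd n (pd n ψ)) (u • n + t • dirVec θ)) Set.univ u := by
      refine (hasDerivAt_comp_curve hF (c := fun u : ℝ => u • n + t • dirVec θ)
        ?_).hasDerivWithinAt
      simpa using ((hasDerivAt_id u).smul_const n).add_const (t • dirVec θ)
    simpa using convex_univ.norm_image_sub_le_of_norm_hasDerivWithin_le (fun u _ => hd u)
      (fun u _ => (hC θ _).2.2.2) (Set.mem_univ 0) (Set.mem_univ s)

/-- At unit scale, subtracting a nonnegative annular function makes the central X-ray transform of
the second normal derivative constant while keeping derivatives under control. -/
theorem exists_unit_correction : ∃ c : ℝ, 0 ≤ c ∧ ∀ C Q : ℝ, 0 ≤ Q → ∃ D : ℝ, 0 ≤ D ∧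
    ∀ (Ω : ℝ × ℝ → ℝ) (q : ℝ), ContDiff ℝ (⊤ : ℕ∞) Ω → HasCompactSupport Ω →
      tsupport Ω ⊆ annulus 0 → NormalBound Ω C → 0 ≤ q → q ≤ Q →
      (∀ θ, -q ≤ xray (invSq Ω) 0 θ) →
      ∃ Ωt : ℝ × ℝ → ℝ, ContDiff ℝ (⊤ : ℕ∞) Ωt ∧ HasCompactSupport Ωt ∧ (∀ p, Ωt p ≤ Ω p) ∧
        ∀ s θ, (2 < |s| → xray (pd (normalVec θ) (pd (normalVec θ) Ωt)) s θ = 0) ∧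
          -(c * q) - D * |s| ≤ xray (pd (normalVec θ) (pd (normalVec θ) Ωt)) s θ := by
  obtain ⟨A, c, hA, hAc, hAs, hA0, hc0, hAc1, hAc2⟩ := exists_annular_bump
  obtain ⟨M, hM⟩ := exists_normalBound hA hAc
  refine ⟨2 * c, by positivity, fun C Q hQ => ?_⟩
  by_cases hC : 0 ≤ C
  swap
  · exact ⟨0, le_rfl, fun Ω q _ _ _ hb => absurd hb.nonneg hC⟩
  have hM0 := hM.nonneg
  refine ⟨4 * (C + 1 * (8 * (M * (2 * Q + 512 * (16 * C))))), by positivity,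
    fun Ω q hΩ hΩc hΩs hb hq hqQ hlow => ?_⟩
  set G := radialMean invSqWeight Ω with hG
  have hGs : ContDiff ℝ (⊤ : ℕ∞) G := contDiff_radialMean continuous_invSqWeight hΩ
  have hGb : NormalBound G (512 * (16 * C)) :=
    NormalBound.radialMean continuous_invSqWeight (fun t _ => abs_invSqWeight_le t) hΩ hb
  have hHs : ContDiff ℝ (⊤ : ℕ∞) fun p => 2 * q + G p := contDiff_const.add hGs
  have hHb : NormalBound (fun p => 2 * q + G p) (2 * Q + 512 * (16 * C)) := by
    intro θ p
    obtain ⟨h0, h1, h2, h3⟩ := (NormalBound.const (2 * q)).add contDiff_const hGs hGb θ p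
    have : |2 * q| ≤ 2 * Q := by rw [abs_of_nonneg (by positivity)]; linarith
    exact ⟨by linarith, by linarith, by linarith, by linarith⟩
  have hAH := hA.mul hHs
  set Ωt : ℝ × ℝ → ℝ := fun p => Ω p + (-1) * (A p * (2 * q + G p)) with hΩt
  have hts : ContDiff ℝ (⊤ : ℕ∞) Ωt := hΩ.add (contDiff_const.mul hAH)
  have htc : HasCompactSupport Ωt := hΩc.add (hAc.mul_right.mul_left)
  have htb : NormalBound Ωt (C + 1 * (8 * (M * (2 * Q + 512 * (16 * C))))) := by
    have h := hb.add hΩ (contDiff_const.mul hAH) ((hM.mul hA hHs hHb).const_mul (-1) hAH)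
    rwa [abs_neg, abs_one] at h
  have htsupp : tsupport Ωt ⊆ annulus 0 := by
    refine closure_minimal (fun p hp => ?_) (isClosed_annulus 0)
    by_contra hcon
    refine hp ?_
    simp only [hΩt]
    rw [image_eq_zero_of_notMem_tsupport fun h => hcon (hΩs h),
      image_eq_zero_of_notMem_tsupport fun h => hcon (hAs h)]
    simp
  have h0 : (0 : ℝ × ℝ) ∉ tsupport Ωt := fun h => zero_notMem_annulus 0 (htsupp h)
  have hGval (r θ : ℝ) (hr : A (r • dirVec θ) ≠ 0) :
      |r| ≤ 2 ∧ G (r • dirVec θ) = |r| * xray (invSq Ω) 0 θ := by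
    have h := mem_annulus_zero.1 (hAs (subset_tsupport _ hr))
    rw [normSq_smul_dirVec, ← sq_abs] at h
    have h1 : 1 / 2 ≤ |r| := by nlinarith [abs_nonneg r]
    have h2 : |r| ≤ 2 := by nlinarith [abs_nonneg r]
    exact ⟨h2, radialMean_smul_dirVec hΩs h1 h2 θ⟩
  have hconst (θ : ℝ) : xray (invSq Ωt) 0 θ = -(2 * c * q) := by
    have hx (ψ : ℝ × ℝ → ℝ) : xray (invSq ψ) 0 θ = ∫ t : ℝ, invSq ψ (t • dirVec θ) := by
      simpa using xray_eq (invSq ψ) 0 θ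
    have hi {ψ : ℝ × ℝ → ℝ} (hψ : ContDiff ℝ (⊤ : ℕ∞) ψ) (hψc : HasCompactSupport ψ)
        (hψs : tsupport ψ ⊆ annulus 0) : Integrable fun t : ℝ => invSq ψ (t • dirVec θ) := by
      have := integrable_comp_line
        (contDiff_invSq hψ fun h => zero_notMem_annulus 0 (hψs h)).continuous
        (hasCompactSupport_invSq hψc) 0 (dirVec_ne_zero θ)
      simpa using this
    have hiA : Integrable fun t : ℝ => invSq A (t • dirVec θ) * |t| :=
      Integrable.of_integral_ne_zero (by rw [hAc2]; exact one_ne_zero)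
    have hsplit (t : ℝ) : invSq Ωt (t • dirVec θ) = invSq Ω (t • dirVec θ) +
        (-(2 * q) * invSq A (t • dirVec θ) +
          -xray (invSq Ω) 0 θ * (invSq A (t • dirVec θ) * |t|)) := by
      simp only [invSq, hΩt]
      by_cases h : A (t • dirVec θ) = 0
      · simp [h]
      · rw [(hGval t θ h).2]
        ring
    rw [hx]
    simp_rw [hsplit]
    have hi2 : Integrable fun t : ℝ => -(2 * q) * invSq A (t • dirVec θ) +
        -xray (invSq Ω) 0 θ * (invSq A (t • dirVec θ) * |t|) :=
      ((hi hA hAc hAs).const_mul _).add (hiA.const_mul _)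
    rw [integral_add (hi hΩ hΩc hΩs) hi2,
      integral_add ((hi hA hAc hAs).const_mul _) (hiA.const_mul _), integral_const_mul,
      integral_const_mul, hAc2, ← hx, ← hx, hAc1]
    ring
  refine ⟨Ωt, hts, htc, fun p => ?_, fun s θ => ⟨fun h => xray_pd_pd_eq_zero htsupp h θ, ?_⟩⟩
  · have hnonneg : 0 ≤ A p * (2 * q + G p) := by
      obtain ⟨θ, hθ⟩ := exists_eq_smul_dirVec p
      by_cases h : A p = 0
      · simp [h]
      · rw [hθ] at h
        obtain ⟨h1, h2⟩ := hGval _ θ h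
        rw [← hθ] at h2
        refine mul_nonneg (hA0 p) ?_
        rw [h2]
        nlinarith [hlow θ, abs_nonneg √(p.1 ^ 2 + p.2 ^ 2)]
    simp only [hΩt]
    linarith
  · have h1 := xray_pd_pd_normSq_mul (contDiff_invSq hts h0) (hasCompactSupport_invSq htc) hconst θ
    rw [normSq_mul_invSq h0] at h1
    have h2 := (abs_le.1 (abs_xray_pd_pd_sub_le hts htsupp htb s θ)).1
    linarith

end

/-! ### Dyadic rescaling -/

section
variable {ψ ω : ℝ × ℝ → ℝ} {k : ℕ} {C : ℝ}

lemma contDiff_scale (hψ : ContDiff ℝ (⊤ : ℕ∞) ψ) (c l : ℝ) :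
    ContDiff ℝ (⊤ : ℕ∞) fun p => c * ψ (l • p) :=
  contDiff_const.mul (hψ.comp (contDiff_id.const_smul l))

lemma hasCompactSupport_scale (hψ : HasCompactSupport ψ) (c : ℝ) {l : ℝ} (hl : l ≠ 0) :
    HasCompactSupport fun p => c * ψ (l • p) :=
  (hψ.comp_smul hl).mul_left

lemma pd_scale (hψ : ContDiff ℝ (⊤ : ℕ∞) ψ) (v : ℝ × ℝ) (c l : ℝ) :
    pd v (fun p => c * ψ (l • p)) = fun p => (c * l) * pd v ψ (l • p) := by
  have h : ContDiff ℝ (⊤ : ℕ∞) fun p => ψ (l • p) := hψ.comp (contDiff_id.const_smul l)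
  rw [pd_const_mul v c h, pd_comp_smul v l hψ]
  funext p
  ring

lemma contDiff_pd_iterate (hψ : ContDiff ℝ (⊤ : ℕ∞) ψ) (v : ℝ × ℝ) (γ : ℕ) :
    ContDiff ℝ (⊤ : ℕ∞) ((pd v)^[γ] ψ) := by
  induction γ with
  | zero => exact hψ
  | succ γ ih =>
    rw [Function.iterate_succ_apply']
    exact ih.pd v

lemma tsupport_pd_iterate_subset (ψ : ℝ × ℝ → ℝ) (v : ℝ × ℝ) (γ : ℕ) :
    tsupport ((pd v)^[γ] ψ) ⊆ tsupport ψ := by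
  induction γ with
  | zero => exact subset_rfl
  | succ γ ih =>
    rw [Function.iterate_succ_apply']
    exact (tsupport_pd_subset _ v).trans ih

lemma pd_iterate_scale (hψ : ContDiff ℝ (⊤ : ℕ∞) ψ) (v : ℝ × ℝ) (c l : ℝ) (γ : ℕ) :
    (pd v)^[γ] (fun p => c * ψ (l • p)) = fun p => (c * l ^ γ) * (pd v)^[γ] ψ (l • p) := by
  induction γ with
  | zero => simp
  | succ γ ih =>
    rw [Function.iterate_succ_apply', ih, pd_scale (contDiff_pd_iterate hψ v γ)]
    simp only [Function.iterate_succ_apply', pow_succ, mul_assoc]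

lemma mem_annulus_iff_sq {p : ℝ × ℝ} :
    p ∈ annulus k ↔ ((2 : ℝ) ^ k) ^ 2 ≤ 4 * (p.1 ^ 2 + p.2 ^ 2) ∧
      p.1 ^ 2 + p.2 ^ 2 ≤ 4 * ((2 : ℝ) ^ k) ^ 2 := by
  have h0 : 0 ≤ p.1 ^ 2 + p.2 ^ 2 := by positivity
  simp only [annulus, Set.mem_ofPred_eq]
  rw [Real.le_sqrt' (by positivity), Real.sqrt_le_left (by positivity), zpow_sub₀ (by norm_num),
    zpow_natCast, zpow_one, pow_succ (2 : ℝ) k, div_pow, div_le_iff₀ (by norm_num), mul_pow]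
  norm_num [mul_comm]

lemma normSq_smul (l : ℝ) (p : ℝ × ℝ) :
    (l • p).1 ^ 2 + (l • p).2 ^ 2 = l ^ 2 * (p.1 ^ 2 + p.2 ^ 2) := by
  simp only [Prod.smul_fst, Prod.smul_snd, smul_eq_mul]
  ring

lemma tsupport_scale_subset (hs : tsupport ω ⊆ annulus k) (c : ℝ) :
    tsupport (fun p => c * ω ((2 : ℝ) ^ k • p)) ⊆ annulus 0 := by
  refine closure_minimal (fun p hp => ?_) (isClosed_annulus 0)
  have hp' : ω ((2 : ℝ) ^ k • p) ≠ 0 := right_ne_zero_of_mul hp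
  have h := mem_annulus_iff_sq.1 (hs (subset_tsupport _ hp'))
  rw [normSq_smul] at h
  have hpos : (0 : ℝ) < ((2 : ℝ) ^ k) ^ 2 := by positivity
  refine mem_annulus_zero.2 ⟨?_, ?_⟩
  · nlinarith [h.1]
  · nlinarith [h.2]

lemma normalBound_scale (hω : ContDiff ℝ (⊤ : ℕ∞) ω) (hs : tsupport ω ⊆ annulus k)
    (hC : 0 ≤ C) (hKN : KNle ω C) :
    NormalBound (fun p => ((2 : ℝ) ^ k)⁻¹ * ω ((2 : ℝ) ^ k • p)) (8 * (4 * C)) := by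
  refine NormalBound.of_coordinates (contDiff_scale hω _ _) fun γ₁ γ₂ hγ p => ?_
  rw [pd_iterate_scale hω, pd_iterate_scale (contDiff_pd_iterate hω _ _)]
  simp only
  set l : ℝ := 2 ^ k with hl
  have hl1 : 1 ≤ l := one_le_pow₀ (by norm_num)
  have hl0 : 0 < l := by linarith
  by_cases hmem : l • p ∈ tsupport ω
  swap
  · rw [image_eq_zero_of_notMem_tsupport fun h =>
      hmem (tsupport_pd_iterate_subset _ _ _ (tsupport_pd_iterate_subset _ _ _ h))]
    simpa using hC
  have hK := hKN γ₁ γ₂ hγ (l • p)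
  obtain ⟨h1, h2⟩ := mem_annulus_iff_sq.1 (hs hmem)
  rw [← hl] at h1 h2
  set d := (pd (1, 0))^[γ₁] ((pd (0, 1))^[γ₂] ω) (l • p)
  set J := √(1 + (l • p).1 ^ 2 + (l • p).2 ^ 2) with hJ
  have hJ2 : J ^ 2 = 1 + (l • p).1 ^ 2 + (l • p).2 ^ 2 := Real.sq_sqrt (by positivity)
  have hJ0 : 0 < J := Real.sqrt_pos.2 (by positivity)
  have hlow : l ≤ 2 * J := by nlinarith
  have hup : J ≤ 4 * l := by nlinarith
  have hfac : l⁻¹ * l ^ γ₂ * l ^ γ₁ ≤ 4 * J ^ ((γ₁ + γ₂ : ℤ) - 1) := by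
    have he : l⁻¹ * l ^ γ₂ * l ^ γ₁ = l⁻¹ * l ^ (γ₁ + γ₂) := by rw [pow_add]; ring
    have he' : J ^ ((γ₁ + γ₂ : ℤ) - 1) = J⁻¹ * J ^ (γ₁ + γ₂) := by
      rw [zpow_sub₀ hJ0.ne', zpow_one, div_eq_inv_mul]
      norm_cast
    rw [he, he']
    generalize γ₁ + γ₂ = m at hγ
    interval_cases m
    · rw [pow_zero, pow_zero, mul_one, mul_one, ← div_eq_mul_inv, inv_eq_one_div,
        div_le_div_iff₀ hl0 hJ0]
      linarith
    · rw [pow_one, pow_one, inv_mul_cancel₀ hl0.ne', inv_mul_cancel₀ hJ0.ne']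
      norm_num
    · rw [sq, sq, inv_mul_cancel_left₀ hl0.ne', inv_mul_cancel_left₀ hJ0.ne']
      linarith
    · rw [pow_succ' l 2, pow_succ' J 2, inv_mul_cancel_left₀ hl0.ne', inv_mul_cancel_left₀ hJ0.ne']
      nlinarith
  rw [abs_mul, abs_of_pos (zpow_pos hJ0 _)] at hK
  rw [abs_mul, abs_of_pos (by positivity)]
  calc l⁻¹ * l ^ γ₂ * l ^ γ₁ * |d| ≤ 4 * J ^ ((γ₁ + γ₂ : ℤ) - 1) * |d| := by gcongr
    _ ≤ 4 * C := by linarith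

lemma xray_invSq_scale (ω : ℝ × ℝ → ℝ) {l : ℝ} (hl : 0 < l) (θ : ℝ) :
    xray (invSq fun p => l⁻¹ * ω (l • p)) 0 θ = xray (invSq ω) 0 θ := by
  have h := Measure.integral_comp_mul_left (fun t : ℝ => invSq ω (t • dirVec θ)) l
  rw [xray_eq, xray_eq]
  simp only [zero_smul, zero_add]
  have hpt (t : ℝ) : invSq (fun p => l⁻¹ * ω (l • p)) (t • dirVec θ) =
      l * invSq ω ((l * t) • dirVec θ) := by
    simp only [invSq, normSq_smul_dirVec, smul_smul]
    rw [mul_pow]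
    field_simp
  simp_rw [hpt]
  rw [integral_const_mul, h, abs_of_pos (inv_pos.2 hl), smul_eq_mul, mul_inv_cancel_left₀ hl.ne']

lemma neg_qOf_le_xray (hω : ContDiff ℝ (⊤ : ℕ∞) ω) (hs : tsupport ω ⊆ annulus k)
    (hC : 0 ≤ C) (hKN : KNle ω C) (θ : ℝ) : -qOf ω ≤ xray (invSq ω) 0 θ := by
  rw [qOf, neg_neg]
  refine ciInf_le ⟨-(8 * (16 * (8 * (4 * C)))), ?_⟩ θ
  rintro _ ⟨η, rfl⟩
  have hb := normalBound_scale hω hs hC hKN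
  have h := radialMean_smul_dirVec (tsupport_scale_subset hs ((2 : ℝ) ^ k)⁻¹) (r := 1)
    (by norm_num) (by norm_num) η
  rw [xray_invSq_scale ω (by positivity), abs_one, one_mul] at h
  simp only
  rw [← h]
  exact (abs_le.1 (abs_radialMean_le (fun t _ => abs_invSqWeight_le t)
    (fun p => (hb 0 p).1) _)).1

lemma qOf_nonneg (hω : ContDiff ℝ (⊤ : ℕ∞) ω) (hs : tsupport ω ⊆ annulus k)
    (hC : 0 ≤ C) (hKN : KNle ω C) (hneg : ∀ p, ω p ≤ 0) : 0 ≤ qOf ω := by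
  have h1 := neg_qOf_le_xray hω hs hC hKN 0
  have h2 : xray (invSq ω) 0 0 ≤ 0 :=
    integral_nonpos fun t => mul_nonpos_of_nonneg_of_nonpos (by positivity) (hneg _)
  linarith

lemma xray_pd_pd_scale (hψ : ContDiff ℝ (⊤ : ℕ∞) ψ) {l : ℝ} (hl : 0 < l) (s θ : ℝ) :
    xray (pd (normalVec θ) (pd (normalVec θ) fun p => l * ψ (l⁻¹ • p))) s θ =
      xray (pd (normalVec θ) (pd (normalVec θ) ψ)) (l⁻¹ * s) θ := by
  rw [pd_scale hψ, pd_scale (hψ.pd _), xray_eq, xray_eq]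
  simp only [smul_add, smul_smul]
  have h := Measure.integral_comp_mul_left (fun t : ℝ => pd (normalVec θ) (pd (normalVec θ) ψ)
    ((l⁻¹ * s) • normalVec θ + t • dirVec θ)) l⁻¹
  rw [integral_const_mul, h, inv_inv, abs_of_pos hl, smul_eq_mul]
  field_simp

/-- The correction at the dyadic scale `2^k`. -/
theorem exists_dyadic_correction : ∃ c : ℝ, 0 ≤ c ∧ ∀ C Q : ℝ, 0 ≤ C → 0 ≤ Q → ∃ D : ℝ, 0 ≤ D ∧
    ∀ (k : ℕ) (ω : ℝ × ℝ → ℝ), ContDiff ℝ (⊤ : ℕ∞) ω → HasCompactSupport ω →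
      tsupport ω ⊆ annulus k → (∀ p, ω p ≤ 0) → KNle ω C → qOf ω ≤ Q →
      ∃ ωt : ℝ × ℝ → ℝ, ContDiff ℝ (⊤ : ℕ∞) ωt ∧ HasCompactSupport ωt ∧ (∀ p, ωt p ≤ ω p) ∧
        ∀ s θ, (2 < |s| / 2 ^ k → xray (pd (normalVec θ) (pd (normalVec θ) ωt)) s θ = 0) ∧
          -(c * qOf ω) - D * (|s| / 2 ^ k) ≤
            xray (pd (normalVec θ) (pd (normalVec θ) ωt)) s θ := by
  obtain ⟨c, hc, h⟩ := exists_unit_correction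
  refine ⟨c, hc, fun C Q hC hQ => ?_⟩
  obtain ⟨D, hD, h⟩ := h (8 * (4 * C)) Q hQ
  refine ⟨D, hD, fun k ω hω hωc hs hneg hKN hq => ?_⟩
  have hl : (0 : ℝ) < 2 ^ k := by positivity
  obtain ⟨Ωt, h1, h2, h3, h4⟩ := h (fun p => ((2 : ℝ) ^ k)⁻¹ * ω ((2 : ℝ) ^ k • p)) (qOf ω)
    (contDiff_scale hω _ _) (hasCompactSupport_scale hωc _ hl.ne') (tsupport_scale_subset hs _)
    (normalBound_scale hω hs hC hKN) (qOf_nonneg hω hs hC hKN hneg) hq fun θ => by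
      rw [xray_invSq_scale ω hl]
      exact neg_qOf_le_xray hω hs hC hKN θ
  refine ⟨fun p => 2 ^ k * Ωt (((2 : ℝ) ^ k)⁻¹ • p), contDiff_scale h1 _ _,
    hasCompactSupport_scale h2 _ (inv_ne_zero hl.ne'), fun p => ?_, fun s θ => ?_⟩
  · have := h3 (((2 : ℝ) ^ k)⁻¹ • p)
    rw [smul_inv_smul₀ hl.ne'] at this
    calc 2 ^ k * Ωt (((2 : ℝ) ^ k)⁻¹ • p) ≤ 2 ^ k * (((2 : ℝ) ^ k)⁻¹ * ω p) := by gcongr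
      _ = ω p := mul_inv_cancel_left₀ hl.ne' _
  · have h5 := h4 (((2 : ℝ) ^ k)⁻¹ * s) θ
    rw [abs_mul, abs_of_pos (inv_pos.2 hl), ← div_eq_inv_mul] at h5
    rw [xray_pd_pd_scale h1 hl]
    exact h5

/-! ### Summation over scales -/

lemma sum_dyadic_le (a : ℝ) (N : ℕ) :
    ∑ k ∈ Finset.range N, (if a / 2 ^ (k + 1) ≤ 2 then a / 2 ^ (k + 1) else 0) ≤
      max 0 (4 - a / 2 ^ N) := by
  induction N with
  | zero => simp
  | succ N ih =>
    rw [Finset.sum_range_succ]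
    have hu : a / 2 ^ N = 2 * (a / 2 ^ (N + 1)) := by
      rw [pow_succ]
      field_simp
    rw [hu] at ih
    split_ifs with h
    · rw [max_eq_right (by linarith)] at ih
      exact le_max_of_le_right (by linarith)
    · rw [max_eq_left (by linarith)] at ih
      exact le_max_of_le_left (by linarith)

lemma sum_dyadic_le_four (a : ℝ) (ha : 0 ≤ a) (N : ℕ) :
    ∑ k ∈ Finset.range N, (if a / 2 ^ (k + 1) ≤ 2 then a / 2 ^ (k + 1) else 0) ≤ 4 := by
  refine (sum_dyadic_le a N).trans (max_le (by norm_num) ?_)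
  have : 0 ≤ a / 2 ^ N := by positivity
  linarith

lemma xray_pd_pd_sum {f : ℕ → ℝ × ℝ → ℝ} (hf : ∀ k, ContDiff ℝ (⊤ : ℕ∞) (f k))
    (hc : ∀ k, HasCompactSupport (f k)) (N : ℕ) (s θ : ℝ) :
    xray (pd (normalVec θ) (pd (normalVec θ) fun p => ∑ k ∈ Finset.range N, f k p)) s θ =
      ∑ k ∈ Finset.range N, xray (pd (normalVec θ) (pd (normalVec θ) (f k))) s θ := by
  rw [pd_sum _ _ fun k _ => hf k, pd_sum _ _ fun k _ => (hf k).pd _]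
  simp only [xray_eq]
  exact integral_finsetSum _ fun k _ => integrable_comp_line (((hf k).pd _).pd _).continuous
    (((hc k).pd _).pd _) _ (dirVec_ne_zero θ)

lemma qOf_zero : qOf 0 = 0 := by
  simp [qOf, xray, invSq]

end

end

/-- For any dyadic weight `ω = Σ_{k≥1} ω_k` as in Theorem 1.6, there is
`ω̃ ∈ C_c^∞(ℝ²)` with `ω̃ ≤ ω` such that `Eω̃ + σ|y|` is plurisubharmonic for all
`σ ≥ σ₀`, where `σ₀ ≥ 0` depends only on `C_reg, C_gr`. -/
theorem psh_construction (Creg Cgr : ℝ) (hCreg : 0 ≤ Creg) (hCgr : 0 ≤ Cgr) :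
    ∃ σ₀ : ℝ, 0 ≤ σ₀ ∧ ∀ ω : ℕ → ℝ × ℝ → ℝ,
      (∀ k, 1 ≤ k → ContDiff ℝ (⊤ : ℕ∞) (ω k)) →
      (∀ k, 1 ≤ k → HasCompactSupport (ω k)) →
      (∀ k, 1 ≤ k → ∀ p, ω k p ≤ 0) →
      (∃ N, ∀ k, N ≤ k → ω k = 0) →
      (∀ k, 1 ≤ k → tsupport (ω k) ⊆ annulus k) →
      (∀ k, 1 ≤ k → KNle (ω k) Creg) →
      (∑' k : ℕ, qOf (ω (k + 1))) ≤ Cgr →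
      ∃ ωt : ℝ × ℝ → ℝ, ContDiff ℝ (⊤ : ℕ∞) ωt ∧ HasCompactSupport ωt ∧
        (∀ p, ωt p ≤ ∑' k : ℕ, ω (k + 1) p) ∧
        ∀ σ : ℝ, σ₀ ≤ σ → Psh (uExt ωt σ) := by
  obtain ⟨c, hc, h⟩ := exists_dyadic_correction
  obtain ⟨D, hD, h⟩ := h Creg Cgr hCreg hCgr
  refine ⟨(c * Cgr + 4 * D) / π, by positivity, ?_⟩
  intro ω hω hωc hneg ⟨N, hN⟩ hs hKN hq
  have hzero (k : ℕ) (hk : k ∉ Finset.range N) : ω (k + 1) = 0 :=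
    hN _ (by simp only [Finset.mem_range, not_lt] at hk; omega)
  have hk1 (k : ℕ) : 1 ≤ k + 1 := by omega
  have hq0 (k : ℕ) : 0 ≤ qOf (ω (k + 1)) :=
    qOf_nonneg (hω _ (hk1 k)) (hs _ (hk1 k)) hCreg (hKN _ (hk1 k)) (hneg _ (hk1 k))
  rw [tsum_eq_sum fun k hk => by rw [hzero k hk, qOf_zero]] at hq
  have hqle (k : ℕ) : qOf (ω (k + 1)) ≤ Cgr := by
    by_cases hk : k ∈ Finset.range N
    · exact (Finset.single_le_sum (fun j _ => hq0 j) hk).trans hq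
    · rwa [hzero k hk, qOf_zero]
  choose f hf hfc hfle hfx using fun k => h (k + 1) (ω (k + 1)) (hω _ (hk1 k)) (hωc _ (hk1 k))
    (hs _ (hk1 k)) (hneg _ (hk1 k)) (hKN _ (hk1 k)) (hqle k)
  have hsumc (M : ℕ) : HasCompactSupport fun p => ∑ k ∈ Finset.range M, f k p := by
    induction M with
    | zero =>
      simp only [Finset.range_zero, Finset.sum_empty]
      exact HasCompactSupport.zero
    | succ M ih =>
      simp only [Finset.sum_range_succ]
      exact ih.add (hfc M)
  have hsum : ContDiff ℝ (⊤ : ℕ∞) fun p => ∑ k ∈ Finset.range N, f k p :=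
    ContDiff.sum fun k _ => hf k
  refine ⟨fun p => ∑ k ∈ Finset.range N, f k p, hsum, hsumc N, fun p => ?_, fun σ hσ => ?_⟩
  · rw [tsum_eq_sum fun k hk => by rw [hzero k hk]; rfl]
    exact Finset.sum_le_sum fun k _ => hfle k p
  · refine psh_uExt_of_xray_ge hsum (hsumc N) fun s θ => ?_
    rw [div_le_iff₀' pi_pos] at hσ
    rw [xray_pd_pd_sum hf hfc]
    have hterm (k : ℕ) : -(c * qOf (ω (k + 1))) -
        D * (if |s| / 2 ^ (k + 1) ≤ 2 then |s| / 2 ^ (k + 1) else 0) ≤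
        xray (pd (normalVec θ) (pd (normalVec θ) (f k))) s θ := by
      split_ifs with hs2
      · exact (hfx k s θ).2
      · rw [(hfx k s θ).1 (not_le.1 hs2)]
        have := mul_nonneg hc (hq0 k)
        linarith
    refine le_trans ?_ (Finset.sum_le_sum fun k _ => hterm k)
    rw [Finset.sum_sub_distrib, Finset.sum_neg_distrib, ← Finset.mul_sum, ← Finset.mul_sum]
    have h1 := mul_le_mul_of_nonneg_left hq hc
    have h2 := mul_le_mul_of_nonneg_left (sum_dyadic_le_four |s| (abs_nonneg s) N) hD
    linarith

end
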